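/- arXiv:2306.07161 — 3 statements merged into one kernel-verified Lean document; each statement's English description precedes it below -/
import Mathlib

section
/- Fix positive integers n, d and x. Then: (i) if either n = 1 or d = 2, then T(n,d;x) = ∅ for every x; (ii) T(2,3;x) = ∅ for every x; (iii) if n ≥ 2, d ≥ 3 and (n,d) ≠ (2,3), then T(n,d;x) ≠ ∅ if and only if x ≥ n + ⌈d/2⌉. -/
open MvPolynomial

noncomputable section

/-- Projective `n`-space over `k`, as the projectivization of `k^(n+1)`. -/
abbrev ProjSpace (k : Type*) [Field k] (n : ℕ) := Projectivization k (Fin (n+1) → k)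

variable (k : Type*) [Field k]

/-- Evaluation at a vector, as a linear map on polynomials. -/
def evalLM {n : ℕ} (v : Fin n → k) : MvPolynomial (Fin n) k →ₗ[k] k :=
  (MvPolynomial.aeval v).toLinearMap

/-- The submodule of polynomials vanishing together with all first partial derivatives at `v`. -/
def doubleVanishing {n : ℕ} (v : Fin n → k) : Submodule k (MvPolynomial (Fin n) k) :=
  LinearMap.ker (evalLM k v) ⊓
    ⨅ i : Fin n, LinearMap.ker ((evalLM k v).comp (MvPolynomial.pderiv i).toLinearMap)

/-- `h^0(I_{2S}(d))`: dimension of degree-`d` forms vanishing doubly at all points of `S`. -/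
def h0 (n d : ℕ) (S : Finset (ProjSpace k n)) : ℕ :=
  Module.finrank k
    ↥(homogeneousSubmodule (Fin (n+1)) k d ⊓ ⨅ p ∈ S, doubleVanishing k p.rep)

/-- `h^1(I_{2S}(d)) = h^0(I_{2S}(d)) + (n+1)#S - C(n+d,n)`. -/
def h1 (n d : ℕ) (S : Finset (ProjSpace k n)) : ℤ :=
  (h0 k n d S : ℤ) + (n+1) * S.card - (n+d).choose n

/-- `S` spans `P^n`: it is contained in no hyperplane. -/
def Spans (n : ℕ) (S : Finset (ProjSpace k n)) : Prop :=
  Submodule.span k (Projectivization.rep '' (S : Set (ProjSpace k n))) = ⊤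

/-- The Terracini locus `T(n,d;x)`. -/
def Terracini (n d x : ℕ) : Set (Finset (ProjSpace k n)) :=
  {S | S.card = x ∧ Spans k n S ∧ 0 < h0 k n d S ∧ 0 < h1 k n d S}

/-- The minimally Terracini locus `T(n,d;x)'`. -/
def minTerracini (n d x : ℕ) : Set (Finset (ProjSpace k n)) :=
  {S | S ∈ Terracini k n d x ∧ ∀ A : Finset (ProjSpace k n), A ⊂ S → h1 k n d A = 0}

end

/-!
Suppose `S` spans and `#S < n + ⌈d/2⌉`. Completing `p ∈ S` to a basis of `k^(n+1)` inside `S` gives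
a linear form vanishing at the other basis points but not at `p`; its powers, times the squares of
linear forms separating the points outside the basis from `p`, give a form of degree `d - 1` that is
singular on `S \ {p}` and nonzero at `p`. By Euler's identity its multiples by linear forms realize
every differential at `p`, so the double points impose independent conditions and `h¹ = 0`. On the
line the same count leaves no form as soon as `#S` is too large for it to apply; a quadric singular
on a spanning set has vanishing partial derivatives; a plane cubic singular at three independent
points is the triangle through them, which has no further singular point.

For existence, `⌈d/2⌉ + 1` points on a line `ℓ` have `h¹ > 0`, by counting forms on `ℓ`. Adjoining
`n - 1` coordinate points off `ℓ` gives a spanning set, and the form `X₂² X₀^(d-2)` (or `X₀ X₂ X₃`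
when `d = 3 ≤ n`) is singular there and along the whole of `ℓ = ⟨e₀, e₁⟩`, which leaves room for
arbitrarily many further points.
-/

namespace Terracini

section Differential

variable {R : Type*} [CommRing R] {σ : Type*}

theorem eval_smul_of_isHomogeneous {d : ℕ} {f : MvPolynomial σ R} (hf : f.IsHomogeneous d)
    (c : R) (v : σ → R) : eval (c • v) f = c ^ d * eval v f := by
  rw [eval_eq, eval_eq, Finset.mul_sum]
  refine Finset.sum_congr rfl fun m hm => ?_
  have h_degree : ∑ i ∈ m.support, m i = d := (hf.degree_eq_sum_deg_support hm).symm
  simp only [Pi.smul_apply, smul_eq_mul, mul_pow, Finset.prod_mul_distrib,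
    Finset.prod_pow_eq_pow_sum, h_degree]
  ring

variable [Fintype σ]

/-- The homogeneous polynomial of degree one attached to a linear functional on `R^σ`, as a linear
function of the functional. -/
noncomputable def linearForm [DecidableEq σ] :
    Module.Dual R (σ → R) →ₗ[R] MvPolynomial σ R :=
  ∑ i, (LinearMap.applyₗ (Pi.single i 1)).smulRight (X i)

theorem linearForm_apply [DecidableEq σ] (φ : Module.Dual R (σ → R)) :
    linearForm φ = ∑ i, φ (Pi.single i 1) • (X i : MvPolynomial σ R) := by
  simp [linearForm]

theorem linearForm_proj [DecidableEq σ] (i : σ) :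
    linearForm (LinearMap.proj i) = (X i : MvPolynomial σ R) := by
  simp [linearForm_apply, Pi.single_apply]

theorem eval_linearForm [DecidableEq σ] (φ : Module.Dual R (σ → R)) (v : σ → R) :
    eval v (linearForm φ) = φ v := by
  conv_rhs => rw [pi_eq_sum_univ' v]
  simp [linearForm_apply, mul_comm, Pi.single]

theorem isHomogeneous_linearForm [DecidableEq σ] (φ : Module.Dual R (σ → R)) :
    (linearForm φ).IsHomogeneous 1 := by
  rw [linearForm_apply, ← mem_homogeneousSubmodule]
  exact Submodule.sum_mem _ fun i _ => Submodule.smul_mem _ _ (isHomogeneous_X R i)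

theorem exists_linearForm_eq [DecidableEq σ] {f : MvPolynomial σ R} (hf : f.IsHomogeneous 1) :
    ∃ φ : Module.Dual R (σ → R), linearForm φ = f := by
  have h_span : Submodule.span R (Set.range X) ≤ LinearMap.range (linearForm (R := R) (σ := σ)) :=
    Submodule.span_le.2 <| Set.range_subset_iff.2 fun i => ⟨_, linearForm_proj i⟩
  rw [← homogeneousSubmodule_one_eq_span_X] at h_span
  exact h_span hf

/-- The differential at `v` of a polynomial, as a linear functional on `R^σ`. -/
noncomputable def differential (v : σ → R) : MvPolynomial σ R →ₗ[R] Module.Dual R (σ → R) :=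
  ∑ i, ((aeval v).toLinearMap ∘ₗ (pderiv i).toLinearMap).smulRight (LinearMap.proj i)

theorem differential_apply (v w : σ → R) (f : MvPolynomial σ R) :
    differential v f w = ∑ i, eval v (pderiv i f) * w i := by
  simp [differential, aeval_eq_eval]

theorem differential_apply_single [DecidableEq σ] (v : σ → R) (f : MvPolynomial σ R) (i : σ) :
    differential v f (Pi.single i 1) = eval v (pderiv i f) := by
  simp [differential_apply, Pi.single_apply]

theorem differential_eq_zero_iff {v : σ → R} {f : MvPolynomial σ R} :
    differential v f = 0 ↔ ∀ i, eval v (pderiv i f) = 0 := by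
  classical
  refine ⟨fun h i => by rw [← differential_apply_single, h, LinearMap.zero_apply], fun h => ?_⟩
  ext w
  simp [differential_apply, h]

theorem differential_C (v : σ → R) (c : R) : differential v (C c) = 0 :=
  differential_eq_zero_iff.2 fun i => by simp

theorem differential_X (v : σ → R) (i : σ) : differential v (X i) = LinearMap.proj i := by
  classical
  ext w
  simp [differential_apply, pderiv_X, Pi.single_apply]

theorem differential_mul (v : σ → R) (f g : MvPolynomial σ R) :
    differential v (f * g) = eval v f • differential v g + eval v g • differential v f := by
  ext w
  simp only [differential_apply, pderiv_mul, map_add, map_mul, LinearMap.add_apply,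
    LinearMap.smul_apply, smul_eq_mul, Finset.mul_sum, ← Finset.sum_add_distrib]
  exact Finset.sum_congr rfl fun i _ => by ring

theorem differential_linearForm [DecidableEq σ] (v : σ → R) (φ : Module.Dual R (σ → R)) :
    differential v (linearForm φ) = φ := by
  refine LinearMap.pi_ext' fun i => LinearMap.ext_ring ?_
  simp [linearForm_apply, differential_X, Pi.single_apply]

theorem differential_apply_self {d : ℕ} {f : MvPolynomial σ R} (hf : f.IsHomogeneous d)
    (v : σ → R) : differential v f v = d * eval v f := by
  simpa [differential_apply, mul_comm] using congrArg (eval v) hf.sum_X_mul_pderiv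

theorem differential_smul_of_isHomogeneous {d : ℕ} {f : MvPolynomial σ R}
    (hf : f.IsHomogeneous d) (c : R) (v : σ → R) :
    differential (c • v) f = c ^ (d - 1) • differential v f := by
  ext w
  simp [differential_apply, eval_smul_of_isHomogeneous hf.pderiv, Finset.mul_sum, mul_assoc]

end Differential

section Pullback

variable {R : Type*} [CommRing R] {σ τ : Type*} [Fintype τ] [DecidableEq τ]

/-- Substitution of a linear map `R^τ → R^σ` into a polynomial function on `R^σ`. -/
noncomputable def pullback (ι : (τ → R) →ₗ[R] (σ → R)) :
    MvPolynomial σ R →ₐ[R] MvPolynomial τ R :=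
  bind₁ fun i => linearForm (LinearMap.proj i ∘ₗ ι)

theorem pullback_X (ι : (τ → R) →ₗ[R] (σ → R)) (i : σ) :
    pullback ι (X i) = linearForm (LinearMap.proj i ∘ₗ ι) :=
  bind₁_X_right _ _

theorem eval_pullback (ι : (τ → R) →ₗ[R] (σ → R)) (u : τ → R)
    (f : MvPolynomial σ R) : eval u (pullback ι f) = eval (ι u) f := by
  induction f using MvPolynomial.induction_on with
  | C c => simp
  | add f g hf hg => simp [hf, hg]
  | mul_X f i hf => simp [hf, pullback_X, eval_linearForm]

theorem isHomogeneous_pullback (ι : (τ → R) →ₗ[R] (σ → R)) {d : ℕ}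
    {f : MvPolynomial σ R} (hf : f.IsHomogeneous d) : (pullback ι f).IsHomogeneous d := by
  rw [← one_mul d]
  exact hf.aeval _ fun i => isHomogeneous_linearForm (LinearMap.proj i ∘ₗ ι)

theorem differential_pullback [Fintype σ] (ι : (τ → R) →ₗ[R] (σ → R)) (u : τ → R)
    (f : MvPolynomial σ R) : differential u (pullback ι f) = differential (ι u) f ∘ₗ ι := by
  induction f using MvPolynomial.induction_on with
  | C c => simp [differential_C, ← algebraMap_eq]
  | add f g hf hg => simp [hf, hg, LinearMap.add_comp]
  | mul_X f i hf =>
    rw [map_mul, differential_mul, differential_mul, hf, pullback_X, differential_linearForm,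
      differential_X, eval_pullback, eval_linearForm, eval_X]
    rfl

end Pullback

section DoublePoints

variable {k : Type*} [Field k] {n d : ℕ}

theorem mem_doubleVanishing {v : Fin n → k} {f : MvPolynomial (Fin n) k} :
    f ∈ doubleVanishing k v ↔ eval v f = 0 ∧ differential v f = 0 := by
  simp [doubleVanishing, evalLM, aeval_eq_eval, differential_eq_zero_iff]

theorem mem_doubleVanishing_of_mul_dvd {v : Fin n → k} {f g h : MvPolynomial (Fin n) k}
    (hg : eval v g = 0) (hh : eval v h = 0) (h_dvd : g * h ∣ f) : f ∈ doubleVanishing k v := by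
  obtain ⟨q, rfl⟩ := h_dvd
  simp [mem_doubleVanishing, differential_mul, hg, hh]

theorem mul_mem_doubleVanishing {v : Fin n → k} {f : MvPolynomial (Fin n) k}
    (hf : f ∈ doubleVanishing k v) (g : MvPolynomial (Fin n) k) :
    f * g ∈ doubleVanishing k v := by
  rw [mem_doubleVanishing] at hf ⊢
  simp [differential_mul, hf]

theorem mem_doubleVanishing_smul_iff {f : MvPolynomial (Fin n) k} (hf : f.IsHomogeneous d)
    {c : k} (hc : c ≠ 0) {v : Fin n → k} :
    f ∈ doubleVanishing k (c • v) ↔ f ∈ doubleVanishing k v := by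
  simp [mem_doubleVanishing, eval_smul_of_isHomogeneous hf, differential_smul_of_isHomogeneous hf,
    hc]

theorem mem_doubleVanishing_iff_differential_eq_zero {f : MvPolynomial (Fin n) k}
    (hf : f.IsHomogeneous d) (hd : (d : k) ≠ 0) {v : Fin n → k} :
    f ∈ doubleVanishing k v ↔ differential v f = 0 := by
  rw [mem_doubleVanishing, and_iff_right_iff_imp]
  intro h_diff
  simpa [h_diff, hd] using differential_apply_self hf v

theorem pullback_mem_doubleVanishing {m : ℕ} {ι : (Fin m → k) →ₗ[k] (Fin n → k)} {u : Fin m → k}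
    {f : MvPolynomial (Fin n) k} (hf : f ∈ doubleVanishing k (ι u)) :
    pullback ι f ∈ doubleVanishing k u := by
  rw [mem_doubleVanishing] at hf ⊢
  rw [eval_pullback, differential_pullback, hf.1, hf.2, LinearMap.zero_comp]
  exact ⟨rfl, rfl⟩

theorem finrank_homogeneousSubmodule (k : Type*) [Field k] (n d : ℕ) :
    Module.finrank k (homogeneousSubmodule (Fin (n + 1)) k d) = (n + d).choose n := by
  have h_exponents : {m : Fin (n + 1) →₀ ℕ | m.degree = d}
      = ((Finset.univ.finsuppAntidiag d : Finset (Fin (n + 1) →₀ ℕ)) : Set (Fin (n + 1) →₀ ℕ)) := by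
    ext m
    simp [Finsupp.degree_eq_sum]
  rw [homogeneousSubmodule_eq_finsupp_supported, h_exponents,
    (AddMonoidAlgebra.supportedEquivFinsupp _).finrank_eq, Module.finrank_finsupp_self]
  simp only [Finset.coe_sort_coe, Fintype.card_coe]
  rw [Finset.card_finsuppAntidiag_nat_eq_choose, Finset.card_univ, Fintype.card_fin,
    Nat.add_right_comm, Nat.add_sub_cancel, Nat.choose_symm_add]

/-- The space `H⁰(I_{2S}(d))` of forms of degree `d` singular at every point of `S`. -/
noncomputable def singularForms (d : ℕ) (S : Finset (ProjSpace k n)) :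
    Submodule k (MvPolynomial (Fin (n + 1)) k) :=
  homogeneousSubmodule (Fin (n + 1)) k d ⊓ ⨅ p ∈ S, doubleVanishing k p.rep

theorem mem_singularForms {S : Finset (ProjSpace k n)} {f : MvPolynomial (Fin (n + 1)) k} :
    f ∈ singularForms d S ↔ f.IsHomogeneous d ∧ ∀ p ∈ S, f ∈ doubleVanishing k p.rep := by
  simp [singularForms]

theorem h0_eq_finrank_singularForms (S : Finset (ProjSpace k n)) :
    h0 k n d S = Module.finrank k (singularForms d S) :=
  rfl

instance (n d : ℕ) : FiniteDimensional k (homogeneousSubmodule (Fin (n + 1)) k d) :=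
  Module.Finite.iff_fg.2 (homogeneousSubmodule_fg _ _ _)

instance (S : Finset (ProjSpace k n)) : FiniteDimensional k (singularForms d S) :=
  Submodule.finiteDimensional_of_le inf_le_left

theorem h0_pos_iff {S : Finset (ProjSpace k n)} :
    0 < h0 k n d S ↔ ∃ f ∈ singularForms d S, f ≠ 0 := by
  rw [h0_eq_finrank_singularForms, Module.finrank_pos_iff, Submodule.nontrivial_iff_ne_bot,
    Submodule.ne_bot_iff]

theorem h0_pos_of_le {e : ℕ} (hde : d ≤ e) {S : Finset (ProjSpace k n)} (h : 0 < h0 k n d S) :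
    0 < h0 k n e S := by
  obtain ⟨f, hf, hf0⟩ := h0_pos_iff.1 h
  obtain ⟨hf_hom, hf_sing⟩ := mem_singularForms.1 hf
  refine h0_pos_iff.2 ⟨f * X 0 ^ (e - d), mem_singularForms.2 ⟨?_, fun p hp => ?_⟩,
    mul_ne_zero hf0 (pow_ne_zero _ (X_ne_zero 0))⟩
  · simpa [Nat.add_sub_cancel' hde] using hf_hom.mul ((isHomogeneous_X k 0).pow (e - d))
  · exact mul_mem_doubleVanishing (hf_sing p hp) _

/-- The map sending a form of degree `d` to its differentials at the points of `S`. By Euler's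
identity its kernel consists of the forms singular along `S` as soon as `d ≠ 0` in `k`. -/
noncomputable def differentialsAt (d : ℕ) (S : Finset (ProjSpace k n)) :
    homogeneousSubmodule (Fin (n + 1)) k d →ₗ[k] (S → Module.Dual k (Fin (n + 1) → k)) :=
  LinearMap.pi fun p => differential p.1.rep ∘ₗ Submodule.subtype _

theorem differentialsAt_apply {S : Finset (ProjSpace k n)}
    (f : homogeneousSubmodule (Fin (n + 1)) k d) (p : S) :
    differentialsAt d S f p = differential p.1.rep f.1 :=
  rfl

theorem map_ker_differentialsAt (hd : (d : k) ≠ 0) (S : Finset (ProjSpace k n)) :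
    (LinearMap.ker (differentialsAt d S)).map (Submodule.subtype _) = singularForms d S := by
  ext f
  rw [mem_singularForms]
  constructor
  · rintro ⟨f, hf, rfl⟩
    exact ⟨f.2, fun p hp => (mem_doubleVanishing_iff_differential_eq_zero f.2 hd).2
      (congrFun hf ⟨p, hp⟩)⟩
  · rintro ⟨hf_hom, hf_sing⟩
    exact ⟨⟨f, hf_hom⟩, funext fun p => (mem_doubleVanishing.1 (hf_sing p p.2)).2, rfl⟩

theorem finrank_pi_dual (S : Finset (ProjSpace k n)) :
    Module.finrank k (S → Module.Dual k (Fin (n + 1) → k)) = (n + 1) * S.card := by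
  simp [Module.finrank_pi_fintype, Subspace.dual_finrank_eq, mul_comm]

theorem h1_add_finrank_range (hd : (d : k) ≠ 0) (S : Finset (ProjSpace k n)) :
    h1 k n d S + Module.finrank k (LinearMap.range (differentialsAt d S)) = (n + 1) * S.card := by
  have h_rank_nullity := LinearMap.finrank_range_add_finrank_ker (differentialsAt d S)
  rw [finrank_homogeneousSubmodule, ← Submodule.finrank_map_subtype_eq, map_ker_differentialsAt hd,
    ← h0_eq_finrank_singularForms] at h_rank_nullity
  rw [h1, ← h_rank_nullity]
  push_cast
  ring

theorem h1_nonneg (hd : (d : k) ≠ 0) (S : Finset (ProjSpace k n)) : 0 ≤ h1 k n d S := by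
  have h_le := Submodule.finrank_le (LinearMap.range (differentialsAt d S))
  rw [finrank_pi_dual] at h_le
  have h_sum := h1_add_finrank_range hd S
  zify at h_le
  linarith

theorem h1_eq_zero_iff_surjective (hd : (d : k) ≠ 0) (S : Finset (ProjSpace k n)) :
    h1 k n d S = 0 ↔ Function.Surjective (differentialsAt d S) := by
  have h_sum := h1_add_finrank_range hd S
  have h_target := finrank_pi_dual S
  rw [← LinearMap.range_eq_top]
  constructor
  · intro h
    refine Submodule.eq_top_of_finrank_eq ?_
    rw [h_target]
    zify
    linarith
  · intro h
    rw [h, finrank_top, h_target] at h_sum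
    push_cast at h_sum
    linarith

/-- The double points supported on `S` impose independent conditions on forms of degree `d`: at each
point of `S`, every covector is the differential of a form singular at all the other points. -/
def DoublePointsIndependent (d : ℕ) (S : Finset (ProjSpace k n)) : Prop :=
  ∀ p ∈ S, ∀ φ : Module.Dual k (Fin (n + 1) → k), ∃ f : MvPolynomial (Fin (n + 1)) k,
    f.IsHomogeneous d ∧ (∀ q ∈ S, q ≠ p → f ∈ doubleVanishing k q.rep) ∧
      differential p.rep f = φ

theorem DoublePointsIndependent.subset {A S : Finset (ProjSpace k n)}
    (hS : DoublePointsIndependent d S) (hAS : A ⊆ S) : DoublePointsIndependent d A := by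
  intro p hp φ
  obtain ⟨f, hf_hom, hf_sing, hf_diff⟩ := hS p (hAS hp) φ
  exact ⟨f, hf_hom, fun q hq => hf_sing q (hAS hq), hf_diff⟩

theorem h1_eq_zero_iff (hd : (d : k) ≠ 0) (S : Finset (ProjSpace k n)) :
    h1 k n d S = 0 ↔ DoublePointsIndependent d S := by
  classical
  rw [h1_eq_zero_iff_surjective hd]
  constructor
  · intro h_surj p hp φ
    obtain ⟨f, hf⟩ := h_surj (Pi.single ⟨p, hp⟩ φ)
    refine ⟨f, f.2, fun q hq hqp => ?_, ?_⟩
    · rw [mem_doubleVanishing_iff_differential_eq_zero f.2 hd,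
        ← differentialsAt_apply f ⟨q, hq⟩, hf, Pi.single_eq_of_ne (by simpa using hqp)]
    · rw [← differentialsAt_apply f ⟨p, hp⟩, hf, Pi.single_eq_same]
  · intro h_indep Φ
    choose f hf_hom hf_sing hf_diff using fun p : S => h_indep p p.2 (Φ p)
    refine ⟨∑ p, ⟨f p, hf_hom p⟩, funext fun q => ?_⟩
    rw [map_sum, Finset.sum_apply, Finset.sum_eq_single q]
    · exact hf_diff q
    · intro p _ hpq
      exact (mem_doubleVanishing.1 (hf_sing p q q.2 fun h => hpq (Subtype.ext h.symm))).2
    · simp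

theorem h1_pos_iff (hd : (d : k) ≠ 0) (S : Finset (ProjSpace k n)) :
    0 < h1 k n d S ↔ ¬ DoublePointsIndependent d S := by
  rw [← h1_eq_zero_iff hd, (h1_nonneg hd S).lt_iff_ne', ne_eq]

theorem h1_pos_of_subset (hd : (d : k) ≠ 0) {A S : Finset (ProjSpace k n)} (hAS : A ⊆ S)
    (hA : 0 < h1 k n d A) : 0 < h1 k n d S := by
  rw [h1_pos_iff hd] at hA ⊢
  exact fun hS => hA (hS.subset hAS)

/- Put `φ = K(p)⁻¹ • (w - s • dK)` for a scalar `s`. The differential of `K * φ` at `p` is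
`w - s • dK + φ(p) • dK`, and by Euler's identity `φ(p) = s` amounts to `(d + 1) * K(p) * s = w(p)`.
-/
theorem exists_differential_mul_linearForm_eq (hd : (d + 1 : k) ≠ 0) {p : Fin n → k}
    {K : MvPolynomial (Fin n) k} (hK : K.IsHomogeneous d) (hKp : eval p K ≠ 0)
    (w : Module.Dual k (Fin n → k)) : ∃ φ, differential p (K * linearForm φ) = w := by
  set s := w p / ((d + 1) * eval p K) with hs
  set φ := (eval p K)⁻¹ • (w - s • differential p K) with hφ
  have h_value : φ p = s := by
    simp only [hφ, LinearMap.smul_apply, LinearMap.sub_apply, smul_eq_mul,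
      differential_apply_self hK, hs]
    field_simp
    ring
  refine ⟨φ, ?_⟩
  rw [differential_mul, differential_linearForm, eval_linearForm, h_value, hφ,
    smul_inv_smul₀ hKp, sub_add_cancel]

theorem doublePointsIndependent_of_forall_exists_separating (hd : (d + 1 : k) ≠ 0)
    {S : Finset (ProjSpace k n)}
    (h_sep : ∀ p ∈ S, ∃ K : MvPolynomial (Fin (n + 1)) k, K.IsHomogeneous d ∧
      (∀ q ∈ S, q ≠ p → K ∈ doubleVanishing k q.rep) ∧ eval p.rep K ≠ 0) :
    DoublePointsIndependent (d + 1) S := by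
  intro p hp w
  obtain ⟨K, hK_hom, hK_sing, hKp⟩ := h_sep p hp
  obtain ⟨φ, hφ⟩ := exists_differential_mul_linearForm_eq hd hK_hom hKp w
  exact ⟨K * linearForm φ, hK_hom.mul (isHomogeneous_linearForm φ),
    fun q hq hqp => mul_mem_doubleVanishing (hK_sing q hq hqp) _, hφ⟩

end DoublePoints

section Spanning

variable {k : Type*} [Field k] {n d x : ℕ}

theorem exists_basis_rep_of_spans {S : Finset (ProjSpace k n)} (hS : Spans k n S)
    {p : ProjSpace k n} (hp : p ∈ S) :
    ∃ B ⊆ S, p ∈ B ∧ ∃ b : Module.Basis B k (Fin (n + 1) → k), ∀ q, b q = q.1.rep := by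
  have h_single : LinearIndepOn k Projectivization.rep {p} :=
    LinearIndepOn.singleton p.rep_nonzero
  obtain ⟨B, hBS, hpB, h_span, h_indep⟩ :=
    exists_linearIndepOn_extension h_single (Set.singleton_subset_iff.2 (Finset.mem_coe.2 hp))
  lift B to Finset (ProjSpace k n) using S.finite_toSet.subset hBS
  have h_top : ⊤ ≤ Submodule.span k (Set.range fun q : B => q.1.rep) := by
    rw [Spans] at hS
    rw [← hS, Submodule.span_le]
    simpa [Set.image_eq_range] using h_span
  exact ⟨B, Finset.coe_subset.1 hBS, by simpa using hpB, Module.Basis.mk h_indep h_top,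
    Module.Basis.mk_apply _ _⟩

theorem card_eq_of_basis {B : Finset (ProjSpace k n)} (b : Module.Basis B k (Fin (n + 1) → k)) :
    B.card = n + 1 := by
  simpa using (Module.finrank_eq_card_basis b).symm

theorem spans_of_basis_rep {B : Finset (ProjSpace k n)} {b : Module.Basis B k (Fin (n + 1) → k)}
    (hb : ∀ q, b q = q.1.rep) : Spans k n B := by
  rw [Spans, Set.image_eq_range, ← b.span_eq]
  exact congrArg _ (congrArg Set.range (funext fun q => (hb q).symm))

theorem exists_mem_of_spans {S : Finset (ProjSpace k n)} (hS : Spans k n S) : ∃ p, p ∈ S := by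
  by_contra h_empty
  rw [Finset.not_nonempty_iff_eq_empty.1 h_empty, Spans, Finset.coe_empty, Set.image_empty,
    Submodule.span_empty] at hS
  exact bot_ne_top hS

theorem lt_card_of_spans {S : Finset (ProjSpace k n)} (hS : Spans k n S) : n < S.card := by
  obtain ⟨p, hp⟩ := exists_mem_of_spans hS
  obtain ⟨B, hBS, -, b, -⟩ := exists_basis_rep_of_spans hS hp
  calc n < B.card := by rw [card_eq_of_basis b]; exact n.lt_succ_self
    _ ≤ S.card := Finset.card_le_card hBS

theorem exists_dual_separating {p q : ProjSpace k n} (hqp : q ≠ p) :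
    ∃ φ : Module.Dual k (Fin (n + 1) → k), φ q.rep = 0 ∧ φ p.rep ≠ 0 := by
  have h_notMem : p.rep ∉ Submodule.span k {q.rep} := by
    rw [Submodule.mem_span_singleton]
    rintro ⟨c, hc⟩
    have h_indep := Projectivization.linearIndependent_pair_iff_ne.2 hqp
    exact (LinearIndependent.pair_iff' q.rep_nonzero).1 h_indep c hc
  obtain ⟨φ, hφp, hφ⟩ := Submodule.exists_le_ker_of_notMem h_notMem
  exact ⟨φ, hφ (Submodule.mem_span_singleton_self _), hφp⟩

theorem exists_isHomogeneous_separating {p : ProjSpace k n} {R : Finset (ProjSpace k n)}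
    (hp : p ∉ R) : ∃ K : MvPolynomial (Fin (n + 1)) k, K.IsHomogeneous (2 * R.card) ∧
      (∀ q ∈ R, K ∈ doubleVanishing k q.rep) ∧ eval p.rep K ≠ 0 := by
  choose φ hφq hφp using fun q : R => exists_dual_separating (ne_of_mem_of_not_mem q.2 hp)
  refine ⟨∏ q, linearForm (φ q) ^ 2, ?_, fun q hq => ?_, ?_⟩
  · have h_hom := IsHomogeneous.prod Finset.univ (fun q => linearForm (φ q) ^ 2) (fun _ => 2)
      fun q _ => (isHomogeneous_linearForm (φ q)).pow 2
    simpa [mul_comm] using h_hom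
  · have h_zero : eval q.rep (linearForm (φ ⟨q, hq⟩)) = 0 := by
      rw [eval_linearForm, hφq ⟨q, hq⟩]
    refine mem_doubleVanishing_of_mul_dvd h_zero h_zero ?_
    rw [← pow_two]
    exact Finset.dvd_prod_of_mem (fun q => linearForm (φ q) ^ 2) (Finset.mem_univ _)
  · rw [map_prod, Finset.prod_ne_zero_iff]
    intro q _
    rw [map_pow, eval_linearForm]
    exact pow_ne_zero 2 (hφp q)

theorem exists_separating_of_card_le {S : Finset (ProjSpace k n)} (hS : Spans k n S)
    (hx : 2 * S.card ≤ 2 * n + d) {p : ProjSpace k n} (hp : p ∈ S) :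
    ∃ K : MvPolynomial (Fin (n + 1)) k, K.IsHomogeneous d ∧
      (∀ q ∈ S, q ≠ p → K ∈ doubleVanishing k q.rep) ∧ eval p.rep K ≠ 0 := by
  classical
  obtain ⟨B, hBS, hpB, b, hb⟩ := exists_basis_rep_of_spans hS hp
  obtain ⟨K, hK_hom, hK_sing, hKp⟩ :=
    exists_isHomogeneous_separating (R := S \ B) (p := p) (by simp [hpB])
  have h_card := Finset.card_sdiff_add_card_eq_card hBS
  rw [card_eq_of_basis b] at h_card
  obtain ⟨e, he⟩ := Nat.exists_eq_add_of_le (show 2 * (S \ B).card + 2 ≤ d by omega)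
  have h_coord (q : B) : eval q.1.rep (linearForm (b.coord ⟨p, hpB⟩)) = b.repr (b q) ⟨p, hpB⟩ := by
    rw [eval_linearForm, hb q, b.coord_apply]
  refine ⟨K * linearForm (b.coord ⟨p, hpB⟩) ^ (2 + e), ?_, fun q hq hqp => ?_, ?_⟩
  · rw [he, add_assoc]
    simpa using hK_hom.mul ((isHomogeneous_linearForm _).pow (2 + e))
  · by_cases hqB : q ∈ B
    · have h_zero : eval q.rep (linearForm (b.coord ⟨p, hpB⟩)) = 0 := by
        rw [h_coord ⟨q, hqB⟩, b.repr_self, Finsupp.single_eq_of_ne (by simpa using hqp.symm)]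
      refine mem_doubleVanishing_of_mul_dvd h_zero h_zero ?_
      rw [← pow_two]
      exact (pow_dvd_pow _ (Nat.le_add_right 2 e)).mul_left K
    · exact mul_mem_doubleVanishing (hK_sing q (Finset.mem_sdiff.2 ⟨hq, hqB⟩)) _
  · rw [map_mul, map_pow, h_coord ⟨p, hpB⟩, b.repr_self, Finsupp.single_eq_same, one_pow, mul_one]
    exact hKp

theorem h1_eq_zero_of_card_lt (hd : (d : k) ≠ 0) {S : Finset (ProjSpace k n)} (hS : Spans k n S)
    (hx : S.card < n + (d + 1) / 2) : h1 k n d S = 0 := by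
  obtain ⟨e, rfl⟩ := Nat.exists_eq_succ_of_ne_zero (ne_of_apply_ne (Nat.cast (R := k)) (by simpa))
  rw [h1_eq_zero_iff hd]
  exact doublePointsIndependent_of_forall_exists_separating (by exact_mod_cast hd)
    fun p hp => exists_separating_of_card_le hS (by omega) hp

theorem le_of_nonempty (hd : (d : k) ≠ 0) (h : (Terracini k n d x).Nonempty) :
    n + (d + 1) / 2 ≤ x := by
  obtain ⟨S, rfl, hS, -, h1_pos⟩ := h
  by_contra! h_lt
  exact h1_pos.ne' (h1_eq_zero_of_card_lt hd hS h_lt)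

end Spanning

section Emptiness

variable {k : Type*} [Field k] {n d : ℕ}

theorem h1_eq_zero_of_h0_pos_of_line [CharZero k] {S : Finset (ProjSpace k 1)}
    (hS : Spans k 1 S) (h_pos : 0 < h0 k 1 d S) : h1 k 1 d S = 0 := by
  have h_card := lt_card_of_spans hS
  by_cases h_le : 2 * S.card ≤ d + 1
  · exact h1_eq_zero_of_card_lt (Nat.cast_ne_zero.2 (by omega)) hS (by omega)
  · -- In degree `2 * #S - 1` the double points are independent and leave no form.
    have h_pos_high : 0 < h0 k 1 (2 * S.card - 1) S := h0_pos_of_le (by omega) h_pos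
    have h_zero : h1 k 1 (2 * S.card - 1) S = 0 :=
      h1_eq_zero_of_card_lt (Nat.cast_ne_zero.2 (by omega)) hS (by omega)
    rw [h1, Nat.choose_one_right] at h_zero
    omega

theorem line_eq_empty [CharZero k] (d x : ℕ) : Terracini k 1 d x = ∅ :=
  Set.eq_empty_of_forall_notMem fun _ ⟨_, hS, h_pos, h1_pos⟩ =>
    h1_pos.ne' (h1_eq_zero_of_h0_pos_of_line hS h_pos)

theorem eq_zero_of_forall_rep_eq_zero {S : Finset (ProjSpace k n)} (hS : Spans k n S)
    {φ : Module.Dual k (Fin (n + 1) → k)} (hφ : ∀ p ∈ S, φ p.rep = 0) : φ = 0 := by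
  rw [Spans] at hS
  exact LinearMap.ext_on hS (by rintro _ ⟨p, hp, rfl⟩; exact hφ p hp)

theorem h0_quadric_eq_zero (h2 : (2 : k) ≠ 0) {S : Finset (ProjSpace k n)} (hS : Spans k n S) :
    h0 k n 2 S = 0 := by
  refine Nat.eq_zero_of_not_pos fun h_pos => ?_
  obtain ⟨f, hf, hf0⟩ := h0_pos_iff.1 h_pos
  obtain ⟨hf_hom, hf_sing⟩ := mem_singularForms.1 hf
  have h_pderiv (i : Fin (n + 1)) : pderiv i f = 0 := by
    obtain ⟨φ, hφ⟩ := exists_linearForm_eq (hf_hom.pderiv (i := i))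
    have h_vanish : ∀ p ∈ S, φ p.rep = 0 := fun p hp => by
      rw [← eval_linearForm, hφ]
      exact differential_eq_zero_iff.1 (mem_doubleVanishing.1 (hf_sing p hp)).2 i
    rw [← hφ, eq_zero_of_forall_rep_eq_zero hS h_vanish, map_zero]
  have h_euler := hf_hom.sum_X_mul_pderiv
  simp only [h_pderiv, mul_zero, Finset.sum_const_zero] at h_euler
  have h_two : (2 : MvPolynomial (Fin (n + 1)) k) ≠ 0 := by
    rw [← map_ofNat C 2]
    exact (C_ne_zero (σ := Fin (n + 1))).2 h2
  simp [h_two, hf0] at h_euler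

theorem quadric_eq_empty (h2 : (2 : k) ≠ 0) (n x : ℕ) : Terracini k n 2 x = ∅ :=
  Set.eq_empty_of_forall_notMem fun _ ⟨_, hS, h_pos, _⟩ => h_pos.ne' (h0_quadric_eq_zero h2 hS)

theorem prod_coord_mem_doubleVanishing_iff {ι : Type*} [Fintype ι]
    (b : Module.Basis ι k (Fin n → k)) {v : Fin n → k} :
    ∏ i, linearForm (b.coord i) ∈ doubleVanishing k v ↔
      ∃ i j, i ≠ j ∧ b.coord i v = 0 ∧ b.coord j v = 0 := by
  classical
  constructor
  · intro h
    rw [mem_doubleVanishing] at h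
    obtain ⟨i, -, hi⟩ := Finset.prod_eq_zero_iff.1 ((map_prod (eval v) _ _).symm.trans h.1)
    rw [eval_linearForm] at hi
    have h_coord : b.coord i ≠ 0 := fun h => by simpa using LinearMap.congr_fun h (b i)
    have h_diff := h.2
    rw [← Finset.mul_prod_erase _ _ (Finset.mem_univ i), differential_mul, eval_linearForm, hi,
      zero_smul, zero_add, differential_linearForm, smul_eq_zero_iff_left h_coord,
      map_prod, Finset.prod_eq_zero_iff] at h_diff
    obtain ⟨j, hj, hj_zero⟩ := h_diff
    rw [eval_linearForm] at hj_zero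
    exact ⟨i, j, (Finset.ne_of_mem_erase hj).symm, hi, hj_zero⟩
  · rintro ⟨i, j, hij, hi, hj⟩
    rw [← eval_linearForm] at hi hj
    refine mem_doubleVanishing_of_mul_dvd hi hj ?_
    rw [← Finset.mul_prod_erase _ _ (Finset.mem_univ i)]
    exact mul_dvd_mul_left _ (Finset.dvd_prod_of_mem _ (by simp [hij.symm]))

theorem prod_coord_mem_singularForms {B : Finset (ProjSpace k n)} (hn : 2 ≤ n)
    {b : Module.Basis B k (Fin (n + 1) → k)} (hb : ∀ q, b q = q.1.rep) :
    ∏ q, linearForm (b.coord q) ∈ singularForms (n + 1) B := by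
  classical
  refine mem_singularForms.2 ⟨?_, fun p hp => ?_⟩
  · have h_hom := IsHomogeneous.prod Finset.univ (fun q => linearForm (b.coord q)) (fun _ => 1)
      fun q _ => isHomogeneous_linearForm (b.coord q)
    simpa [card_eq_of_basis b] using h_hom
  · have h_card : 1 < ({⟨p, hp⟩}ᶜ : Finset B).card := by
      rw [Finset.card_compl, Fintype.card_coe, card_eq_of_basis b, Finset.card_singleton]
      omega
    obtain ⟨i, hi, j, hj, hij⟩ := Finset.one_lt_card.1 h_card
    have h_coord {q : B} (hq : q ∈ ({⟨p, hp⟩}ᶜ : Finset B)) : b.coord q p.rep = 0 := by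
      rw [← hb ⟨p, hp⟩, b.coord_apply, b.repr_self,
        Finsupp.single_eq_of_ne (by simpa using hq)]
    exact (prod_coord_mem_doubleVanishing_iff b).2 ⟨i, j, hij, h_coord hi, h_coord hj⟩

theorem eq_of_forall_coord_eq_zero {B : Finset (ProjSpace k n)}
    {b : Module.Basis B k (Fin (n + 1) → k)} (hb : ∀ q, b q = q.1.rep) {s : ProjSpace k n} {l : B}
    (hs : ∀ q ≠ l, b.coord q s.rep = 0) : s = l := by
  by_contra h_ne
  obtain ⟨φ, hφl, hφs⟩ := exists_dual_separating (Ne.symm h_ne)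
  apply hφs
  rw [← b.sum_repr s.rep, map_sum]
  refine Finset.sum_eq_zero fun q _ => ?_
  by_cases hq : q = l
  · rw [map_smul, hq, hb, hφl, smul_zero]
  · rw [← b.coord_apply, hs q hq, zero_smul, map_zero]

theorem mem_of_prod_coord_mem_doubleVanishing {B : Finset (ProjSpace k 2)}
    {b : Module.Basis B k (Fin 3 → k)} (hb : ∀ q, b q = q.1.rep) {s : ProjSpace k 2}
    (hs : ∏ q, linearForm (b.coord q) ∈ doubleVanishing k s.rep) : s ∈ B := by
  classical
  obtain ⟨i, j, hij, hi, hj⟩ := (prod_coord_mem_doubleVanishing_iff b).1 hs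
  have h_card : ({i, j}ᶜ : Finset B).card = 1 := by
    rw [Finset.card_compl, Fintype.card_coe, card_eq_of_basis b, Finset.card_pair hij]
  obtain ⟨l, hl⟩ := Finset.card_eq_one.1 h_card
  have h_coord : ∀ q ≠ l, b.coord q s.rep = 0 := fun q hq => by
    have hq_pair : q = i ∨ q = j := by
      by_contra h_pair
      exact hq (Finset.mem_singleton.1 (hl ▸ by simpa using h_pair))
    rcases hq_pair with rfl | rfl <;> assumption
  exact eq_of_forall_coord_eq_zero hb h_coord ▸ l.2

theorem h0_cubic_eq_one (h3 : (3 : k) ≠ 0) {B : Finset (ProjSpace k 2)} (hB : Spans k 2 B)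
    (h_card : B.card = 3) : h0 k 2 3 B = 1 := by
  have h_zero : h1 k 2 3 B = 0 :=
    h1_eq_zero_of_card_lt (by exact_mod_cast h3) hB (by rw [h_card]; norm_num)
  rw [h1, h_card, show Nat.choose (2 + 3) 2 = 10 from rfl] at h_zero
  push_cast at h_zero
  omega

theorem h1_cubic_eq_zero_of_h0_pos (h3 : (3 : k) ≠ 0) {S : Finset (ProjSpace k 2)}
    (hS : Spans k 2 S) (h_pos : 0 < h0 k 2 3 S) : h1 k 2 3 S = 0 := by
  obtain ⟨p, hp⟩ := exists_mem_of_spans hS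
  obtain ⟨B, hBS, -, b, hb⟩ := exists_basis_rep_of_spans hS hp
  obtain ⟨f, hf, hf0⟩ := h0_pos_iff.1 h_pos
  have hfB : f ∈ singularForms 3 B := mem_singularForms.2
    ⟨(mem_singularForms.1 hf).1, fun q hq => (mem_singularForms.1 hf).2 q (hBS hq)⟩
  have h_triangle : ∏ q, linearForm (b.coord q) ∈ singularForms 3 S := by
    have h_dim : Module.finrank k (singularForms 3 B) = 1 :=
      h0_cubic_eq_one h3 (spans_of_basis_rep hb) (card_eq_of_basis b)
    obtain ⟨c, hc⟩ := exists_smul_eq_of_finrank_eq_one h_dim (x := ⟨f, hfB⟩)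
      (by simpa using hf0) ⟨_, prod_coord_mem_singularForms le_rfl hb⟩
    have hcf : c • f = ∏ q, linearForm (b.coord q) := congrArg Subtype.val hc
    exact hcf ▸ Submodule.smul_mem _ c hf
  have hSB : S ⊆ B := fun s hs =>
    mem_of_prod_coord_mem_doubleVanishing hb ((mem_singularForms.1 h_triangle).2 s hs)
  refine h1_eq_zero_of_card_lt (by exact_mod_cast h3) hS ?_
  rw [hSB.antisymm hBS, card_eq_of_basis b]
  norm_num

theorem plane_cubic_eq_empty (h3 : (3 : k) ≠ 0) (x : ℕ) : Terracini k 2 3 x = ∅ :=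
  Set.eq_empty_of_forall_notMem fun _ ⟨_, hS, h_pos, h1_pos⟩ =>
    h1_pos.ne' (h1_cubic_eq_zero_of_h0_pos h3 hS h_pos)

end Emptiness

section Existence

variable {k : Type*} [Field k] {m n d x : ℕ}

theorem exists_rep_mk_eq_smul {v : Fin (n + 1) → k} (hv : v ≠ 0) :
    ∃ c : k, c ≠ 0 ∧ (Projectivization.mk k v hv).rep = c • v := by
  obtain ⟨c, hc⟩ := Projectivization.exists_smul_eq_mk_rep k v hv
  exact ⟨c, c.ne_zero, hc.symm⟩

theorem mem_doubleVanishing_rep_mk_iff {f : MvPolynomial (Fin (n + 1)) k} (hf : f.IsHomogeneous d)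
    {v : Fin (n + 1) → k} (hv : v ≠ 0) :
    f ∈ doubleVanishing k (Projectivization.mk k v hv).rep ↔ f ∈ doubleVanishing k v := by
  obtain ⟨c, hc, h_rep⟩ := exists_rep_mk_eq_smul hv
  rw [h_rep, mem_doubleVanishing_smul_iff hf hc]

theorem mem_span_rep_of_mk_mem {P : Set (ProjSpace k n)} {v : Fin (n + 1) → k} {hv : v ≠ 0}
    (h_mem : Projectivization.mk k v hv ∈ P) :
    v ∈ Submodule.span k (Projectivization.rep '' P) := by
  obtain ⟨c, hc, h_rep⟩ := exists_rep_mk_eq_smul hv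
  rw [← Submodule.smul_mem_iff _ hc, ← h_rep]
  exact Submodule.subset_span (Set.mem_image_of_mem _ h_mem)

/-- The embedding of projective spaces induced by an injective linear map, bundled so that it can be
applied to finite sets of points. -/
noncomputable def mapEmbedding {ι : (Fin (m + 1) → k) →ₗ[k] (Fin (n + 1) → k)}
    (hι : Function.Injective ι) : ProjSpace k m ↪ ProjSpace k n :=
  ⟨Projectivization.map ι hι, Projectivization.map_injective ι hι⟩

theorem mapEmbedding_apply {ι : (Fin (m + 1) → k) →ₗ[k] (Fin (n + 1) → k)}
    (hι : Function.Injective ι) (p : ProjSpace k m) : mapEmbedding hι p =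
      Projectivization.mk k (ι p.rep) ((map_ne_zero_iff ι hι).2 p.rep_nonzero) := by
  conv_lhs => rw [← p.mk_rep]
  exact Projectivization.map_mk ι hι _ _

theorem doublePointsIndependent_of_map
    {ι : (Fin (m + 1) → k) →ₗ[k] (Fin (n + 1) → k)} (hι : Function.Injective ι)
    {A : Finset (ProjSpace k m)} (hA : DoublePointsIndependent d (A.map (mapEmbedding hι))) :
    DoublePointsIndependent d A := by
  intro p hp φ
  obtain ⟨ψ, hψ⟩ := LinearMap.dualMap_surjective_of_injective hι φ
  obtain ⟨c, hc, h_rep⟩ := exists_rep_mk_eq_smul ((map_ne_zero_iff ι hι).2 p.rep_nonzero)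
  obtain ⟨f, hf_hom, hf_sing, hf_diff⟩ :=
    hA (mapEmbedding hι p) (Finset.mem_map_of_mem _ hp) (c ^ (d - 1) • ψ)
  refine ⟨pullback ι f, isHomogeneous_pullback ι hf_hom, fun q hq hqp => ?_, ?_⟩
  · have h_sing := hf_sing _ (Finset.mem_map_of_mem _ hq) ((mapEmbedding hι).injective.ne hqp)
    rw [mapEmbedding_apply, mem_doubleVanishing_rep_mk_iff hf_hom] at h_sing
    exact pullback_mem_doubleVanishing h_sing
  · rw [mapEmbedding_apply, h_rep, differential_smul_of_isHomogeneous hf_hom] at hf_diff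
    rw [differential_pullback, smul_right_injective _ (pow_ne_zero _ hc) hf_diff, ← hψ]
    rfl

theorem h1_map_pos (hd : (d : k) ≠ 0) {ι : (Fin (m + 1) → k) →ₗ[k] (Fin (n + 1) → k)}
    (hι : Function.Injective ι) {A : Finset (ProjSpace k m)} (hA : 0 < h1 k m d A) :
    0 < h1 k n d (A.map (mapEmbedding hι)) := by
  rw [h1_pos_iff hd] at hA ⊢
  exact fun h => hA (doublePointsIndependent_of_map hι h)

theorem range_le_span_rep_map {ι : (Fin (m + 1) → k) →ₗ[k] (Fin (n + 1) → k)}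
    (hι : Function.Injective ι) {A : Finset (ProjSpace k m)} (hA : Spans k m A) :
    LinearMap.range ι ≤ Submodule.span k
      (Projectivization.rep '' (A.map (mapEmbedding hι) : Set (ProjSpace k n))) := by
  rw [Spans] at hA
  rw [← Submodule.map_top, ← hA, Submodule.map_span, Submodule.span_le]
  rintro _ ⟨_, ⟨p, hp, rfl⟩, rfl⟩
  apply mem_span_rep_of_mk_mem (hv := (map_ne_zero_iff ι hι).2 p.rep_nonzero)
  rw [← mapEmbedding_apply hι]
  exact Finset.mem_coe.2 (Finset.mem_map_of_mem _ hp)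

theorem h1_pos_of_lt_two_mul_card {A : Finset (ProjSpace k 1)} (hA : d + 1 < 2 * A.card) :
    0 < h1 k 1 d A := by
  rw [h1, Nat.choose_one_right]
  omega

theorem spans_of_one_lt_card {A : Finset (ProjSpace k 1)} (hA : 1 < A.card) : Spans k 1 A := by
  obtain ⟨p, hp, q, hq, hpq⟩ := Finset.one_lt_card.1 hA
  have h_indep := Projectivization.linearIndependent_pair_iff_ne.2 hpq
  have h_top := h_indep.span_eq_top_of_card_eq_finrank (by simp)
  rw [Spans, eq_top_iff, ← h_top]
  refine Submodule.span_mono (Set.range_subset_iff.2 (Fin.forall_fin_two.2 ⟨?_, ?_⟩))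
  · exact Set.mem_image_of_mem _ hp
  · exact Set.mem_image_of_mem _ hq

theorem infinite_projSpace_one [Infinite k] : Infinite (ProjSpace k 1) := by
  classical
  exact (OnePoint.equivProjectivization k).infinite_iff.1 inferInstance

theorem nonempty_of_infinite (hd : (d : k) ≠ 0) {F : MvPolynomial (Fin (n + 1)) k}
    (hF : F.IsHomogeneous d) (hF0 : F ≠ 0) {Z : Set (ProjSpace k n)} (hZ : Z.Infinite)
    (hFZ : ∀ p ∈ Z, F ∈ doubleVanishing k p.rep) {S : Finset (ProjSpace k n)} (hSZ : ↑S ⊆ Z)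
    (hS : Spans k n S) (h_pos : 0 < h1 k n d S) (hx : S.card ≤ x) :
    (Terracini k n d x).Nonempty := by
  obtain ⟨U, hSU, hUZ, h_card⟩ := hZ.exists_superset_ncard_eq hSZ S.finite_toSet
    ((Set.ncard_coe_finset S).le.trans hx)
  have h_spans : ⊤ ≤ Submodule.span k (Projectivization.rep '' U) :=
    (show Submodule.span k _ = ⊤ from hS).ge.trans (Submodule.span_mono (Set.image_mono hSU))
  have h_finite : U.Finite :=
    Set.finite_of_ncard_pos (h_card ▸ (Nat.zero_le n).trans_lt ((lt_card_of_spans hS).trans_le hx))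
  lift U to Finset (ProjSpace k n) using h_finite
  exact ⟨U, (Set.ncard_coe_finset U).symm.trans h_card, top_le_iff.1 h_spans,
    h0_pos_iff.2 ⟨F, mem_singularForms.2 ⟨hF, fun p hp => hFZ p (hUZ hp)⟩, hF0⟩,
    h1_pos_of_subset hd (Finset.coe_subset.1 hSU) h_pos⟩

theorem nonempty_of_line [Infinite k] (hd : (d : k) ≠ 0)
    {F : MvPolynomial (Fin (n + 1)) k} (hF : F.IsHomogeneous d) (hF0 : F ≠ 0)
    {ι : (Fin 2 → k) →ₗ[k] (Fin (n + 1) → k)} (hι : Function.Injective ι)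
    (hF_line : ∀ u, F ∈ doubleVanishing k (ι u)) {T : Finset (ProjSpace k n)}
    (hFT : ∀ p ∈ T, F ∈ doubleVanishing k p.rep)
    (h_span : LinearMap.range ι ⊔
      Submodule.span k (Projectivization.rep '' (T : Set (ProjSpace k n))) = ⊤)
    (hx : T.card + (d + 1) / 2 + 1 ≤ x) : (Terracini k n d x).Nonempty := by
  classical
  have hd_pos : 0 < d := Nat.pos_of_ne_zero (ne_of_apply_ne (Nat.cast (R := k)) (by simpa))
  have := infinite_projSpace_one (k := k)
  obtain ⟨A, hA⟩ := Infinite.exists_subset_card_eq (ProjSpace k 1) ((d + 1) / 2 + 1)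
  have hZ : (Set.range (mapEmbedding hι) ∪ T).Infinite :=
    (Set.infinite_range_of_injective (mapEmbedding hι).injective).mono Set.subset_union_left
  refine nonempty_of_infinite hd hF hF0 hZ ?_ (S := A.map (mapEmbedding hι) ∪ T)
    ?_ ?_ ?_ ?_
  · rintro p (⟨q, rfl⟩ | hp)
    · rw [mapEmbedding_apply, mem_doubleVanishing_rep_mk_iff hF]
      exact hF_line q.rep
    · exact hFT p hp
  · rw [Finset.coe_union, Finset.coe_map]
    exact Set.union_subset_union_left _ (Set.image_subset_range _ _)
  · have hA_spans : Spans k 1 A := spans_of_one_lt_card (by omega)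
    rw [Spans, Finset.coe_union, Set.image_union, Submodule.span_union, eq_top_iff, ← h_span]
    exact sup_le_sup_right (range_le_span_rep_map hι hA_spans) _
  · exact h1_pos_of_subset hd Finset.subset_union_left
      (h1_map_pos hd hι (h1_pos_of_lt_two_mul_card (by omega)))
  · have h_card := Finset.card_union_le (A.map (mapEmbedding hι)) T
    rw [Finset.card_map] at h_card
    omega

/-- The linear parametrization `(s, t) ↦ s • e_a + t • e_b` of a coordinate line. -/
noncomputable def coordinateLine (a b : Fin n) : (Fin 2 → k) →ₗ[k] (Fin n → k) :=
  LinearMap.single k (fun _ => k) a ∘ₗ LinearMap.proj 0 +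
    LinearMap.single k (fun _ => k) b ∘ₗ LinearMap.proj 1

theorem coordinateLine_apply (a b : Fin n) (u : Fin 2 → k) :
    coordinateLine a b u = Pi.single a (u 0) + Pi.single b (u 1) :=
  rfl

theorem coordinateLine_injective {a b : Fin n} (hab : a ≠ b) :
    Function.Injective (coordinateLine (k := k) a b) := by
  intro u v huv
  rw [coordinateLine_apply, coordinateLine_apply] at huv
  have ha := congrFun huv a
  have hb := congrFun huv b
  simp only [Pi.add_apply, Pi.single_eq_same, Pi.single_eq_of_ne hab, Pi.single_eq_of_ne' hab,
    add_zero, zero_add] at ha hb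
  exact funext (Fin.forall_fin_two.2 ⟨ha, hb⟩)

/-- The point of `P^n` on the `i`-th coordinate axis. -/
noncomputable def coordinatePoint (k : Type*) [Field k] (i : Fin (n + 1)) : ProjSpace k n :=
  Projectivization.mk k (Pi.single i 1) (Pi.single_ne_zero_iff.2 one_ne_zero)

theorem range_coordinateLine_sup_span_coordinatePoint (a b : Fin (n + 1)) :
    LinearMap.range (coordinateLine a b) ⊔ Submodule.span k
      (Projectivization.rep '' (coordinatePoint k '' {a, b}ᶜ)) = ⊤ := by
  rw [eq_top_iff, ← (Pi.basisFun k (Fin (n + 1))).span_eq, Submodule.span_le]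
  rintro _ ⟨i, rfl⟩
  rw [Pi.basisFun_apply]
  by_cases hi : i ∈ ({a, b}ᶜ : Set (Fin (n + 1)))
  · exact Submodule.mem_sup_right (mem_span_rep_of_mk_mem (Set.mem_image_of_mem _ hi))
  · refine Submodule.mem_sup_left ?_
    rcases Set.notMem_compl_iff.1 hi with rfl | rfl
    · exact ⟨![1, 0], by simp [coordinateLine_apply]⟩
    · exact ⟨![0, 1], by simp [coordinateLine_apply]⟩

theorem nonempty_of_coordinateLine [Infinite k] (hd : (d : k) ≠ 0)
    {F : MvPolynomial (Fin (n + 1)) k} (hF : F.IsHomogeneous d) (hF0 : F ≠ 0) {a b : Fin (n + 1)}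
    (hab : a ≠ b) (hF_line : ∀ s t, F ∈ doubleVanishing k (Pi.single a s + Pi.single b t))
    (hF_points : ∀ i, i ≠ a → i ≠ b → F ∈ doubleVanishing k (Pi.single i 1))
    (hx : n + (d + 1) / 2 ≤ x) : (Terracini k n d x).Nonempty := by
  classical
  refine nonempty_of_line hd hF hF0 (coordinateLine_injective hab)
    (fun u => hF_line (u 0) (u 1)) (T := ({a, b}ᶜ : Finset (Fin (n + 1))).image (coordinatePoint k))
    ?_ ?_ ?_
  · intro p hp
    obtain ⟨i, hi, rfl⟩ := Finset.mem_image.1 hp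
    rw [coordinatePoint, mem_doubleVanishing_rep_mk_iff hF]
    simp only [Finset.mem_compl, Finset.mem_insert, Finset.mem_singleton, not_or] at hi
    exact hF_points i hi.1 hi.2
  · rw [Finset.coe_image, Finset.coe_compl, Finset.coe_pair]
    exact range_coordinateLine_sup_span_coordinatePoint a b
  · have h_image := Finset.card_image_le (s := ({a, b}ᶜ : Finset (Fin (n + 1))))
      (f := coordinatePoint k)
    rw [Finset.card_compl, Fintype.card_fin, Finset.card_pair hab] at h_image
    have h_pair := Finset.card_le_univ {a, b}
    rw [Finset.card_pair hab, Fintype.card_fin] at h_pair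
    omega

theorem nonempty_of_four_le [CharZero k] (hn : 2 ≤ n) (hd : 4 ≤ d)
    (hx : n + (d + 1) / 2 ≤ x) : (Terracini k n d x).Nonempty := by
  obtain ⟨e, rfl⟩ := Nat.exists_eq_add_of_le hd
  set c := Fin.castLEEmb (show 3 ≤ n + 1 by omega)
  have hc {i j : Fin 3} (hij : i ≠ j) : c i ≠ c j := c.injective.ne hij
  refine nonempty_of_coordinateLine (F := X (c 2) ^ 2 * X (c 0) ^ (2 + e))
    (a := c 0) (b := c 1) (Nat.cast_ne_zero.2 (by omega)) ?_ ?_ (hc (by decide)) ?_ ?_ hx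
  · rw [show 4 + e = 2 + (2 + e) by ring]
    exact (isHomogeneous_X_pow _ _).mul (isHomogeneous_X_pow _ _)
  · exact mul_ne_zero (pow_ne_zero _ (X_ne_zero _)) (pow_ne_zero _ (X_ne_zero _))
  · intro s t
    have h_zero : eval (Pi.single (c 0) s + Pi.single (c 1) t) (X (c 2)) = (0 : k) := by
      simp [hc]
    refine mem_doubleVanishing_of_mul_dvd h_zero h_zero ?_
    rw [pow_two]
    exact dvd_mul_right _ _
  · intro i hi0 _
    have h_zero : eval (Pi.single i 1) (X (c 0)) = (0 : k) := by simp [hi0.symm]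
    refine mem_doubleVanishing_of_mul_dvd h_zero h_zero ?_
    rw [pow_add, pow_two (X (c 0))]
    exact (dvd_mul_right _ _).mul_left _

theorem cubic_nonempty [CharZero k] (hn : 3 ≤ n) (hx : n + 2 ≤ x) :
    (Terracini k n 3 x).Nonempty := by
  set c := Fin.castLEEmb (show 4 ≤ n + 1 by omega)
  have hc {i j : Fin 4} (hij : i ≠ j) : c i ≠ c j := c.injective.ne hij
  refine nonempty_of_coordinateLine (F := X (c 0) * X (c 2) * X (c 3))
    (a := c 0) (b := c 1) (by norm_num) ?_ ?_ (hc (by decide)) ?_ ?_ hx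
  · exact ((isHomogeneous_X k _).mul (isHomogeneous_X k _)).mul (isHomogeneous_X k _)
  · exact mul_ne_zero (mul_ne_zero (X_ne_zero _) (X_ne_zero _)) (X_ne_zero _)
  · intro s t
    refine mem_doubleVanishing_of_mul_dvd (g := X (c 2)) (h := X (c 3)) ?_ ?_ ?_
    · simp [hc]
    · simp [hc]
    · rw [mul_assoc]
      exact dvd_mul_left _ _
  · intro i hi0 hi1
    have h_zero : eval (Pi.single i 1) (X (c 0)) = (0 : k) := by simp [hi0.symm]
    obtain rfl | hi2 := eq_or_ne i (c 2)
    · refine mem_doubleVanishing_of_mul_dvd (h := X (c 3)) h_zero (by simp [hc]) ?_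
      rw [mul_right_comm]
      exact dvd_mul_right _ _
    · exact mem_doubleVanishing_of_mul_dvd (h := X (c 2)) h_zero (by simp [hi2.symm])
        (dvd_mul_right _ _)

theorem nonempty_of_le [CharZero k] (hn : 2 ≤ n) (hd : 3 ≤ d) (hnd : (n, d) ≠ (2, 3))
    (hx : n + (d + 1) / 2 ≤ x) : (Terracini k n d x).Nonempty := by
  obtain rfl | hd4 := hd.eq_or_lt
  · have hn2 : n ≠ 2 := fun h => hnd (by rw [h])
    exact cubic_nonempty (by omega) hx
  · exact nonempty_of_four_le hn hd4 hx

end Existence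

end Terracini

theorem terracini_nonempty_characterization_general
    (k : Type*) [Field k] [CharZero k] (n d x : ℕ) :
    ((n = 1 ∨ d = 2) → Terracini k n d x = ∅) ∧
    (Terracini k 2 3 x = ∅) ∧
    (2 ≤ n → 3 ≤ d → (n, d) ≠ (2, 3) →
      ((Terracini k n d x).Nonempty ↔ n + (d + 1) / 2 ≤ x)) := by
  refine ⟨?_, Terracini.plane_cubic_eq_empty three_ne_zero x, fun hn hd hnd => ⟨fun h => ?_, ?_⟩⟩
  · rintro (rfl | rfl)
    · exact Terracini.line_eq_empty d x
    · exact Terracini.quadric_eq_empty two_ne_zero n x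
  · exact Terracini.le_of_nonempty (Nat.cast_ne_zero.2 (by omega)) h
  · exact Terracini.nonempty_of_le hn hd hnd

/-- Theorem 1 (characterization of nonempty Terracini loci).
(i) If `n = 1` or `d = 2` then `T(n,d;x) = ∅`; (ii) `T(2,3;x) = ∅`;
(iii) for `n ≥ 2`, `d ≥ 3`, `(n,d) ≠ (2,3)`, `T(n,d;x) ≠ ∅ ↔ x ≥ n + ⌈d/2⌉`. -/
theorem terracini_nonempty_characterization
    (k : Type*) [Field k] [IsAlgClosed k] [CharZero k]
    (n d x : ℕ) (hn : 0 < n) (hd : 0 < d) (hx : 0 < x) :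
    ((n = 1 ∨ d = 2) → Terracini k n d x = ∅) ∧
    (Terracini k 2 3 x = ∅) ∧
    (2 ≤ n → 3 ≤ d → (n, d) ≠ (2, 3) →
      ((Terracini k n d x).Nonempty ↔ n + (d + 1) / 2 ≤ x)) :=
  terracini_nonempty_characterization_general k n d x
end

section
/- Fix integers n ≥ 2, d ≥ 1 and x ≥ 1, and let S ∈ T(n,d;x)' be a minimally Terracini set with respect to O(d). Then: (i) h^1(I_{2S}(d+1)) = 0; (ii) for every integer t ≥ d+1, S ∉ T(n,t;x); (iii) for every integer t with 1 ≤ t ≤ d−1, S ∉ T(n,t;x)'. In particular, d is the unique degree for which S is minimally Terracini, and d is the maximal integer t such that h^1(I_{2S}(t)) > 0. -/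
open MvPolynomial

/-!
In characteristic zero Euler's identity makes the value conditions redundant, so for `d ≠ 0` the
inequality `h¹(I_{2A}(d)) > 0` means that `A` carries a nontrivial *gradient relation* of degree
`d`: vectors `w p` with `∑ p ∈ A, w p ⬝ᵥ ∇f(p) = 0` for all forms `f` of degree `d`. Testing a
relation `w` of degree `d + 1` on products `f * l` with a linear form `l` gives the relation
`p ↦ d * l(p) • w p + l(w p) • p` of degree `d`, the contraction of `w` with `l`. It is nonzero at
`p` when `l(p) ≠ 0` and `w p ≠ 0`, so independence propagates to higher degrees.

Suppose that no proper subset of `S` carries a nontrivial relation of degree `d`; then a relation of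
degree `d` on `S` vanishing at one point vanishes on all of `S`. Let `w` be a relation of degree
`d + 1` on `S` with `w p ≠ 0`. Contracting with a form that does not vanish at `p` shows that `w`
has no zero on `S`. Contracting with a form `l` that kills `p` and `w p` gives a relation vanishing
at `p`, hence on `S`, so `l` kills every point of `S`. Thus `S` lies on the line spanned by `p` and
`w p`, which is impossible when `S` spans `ℙⁿ` with `n ≥ 2`.
-/

section LinearFunctionals

variable {K V ι : Type*} [Field K] [AddCommGroup V] [Module K V] [FiniteDimensional K V]

theorem finrank_image_add_finrank_iInf_ker (φ : ι → Module.Dual K V) (s : Set ι) :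
    (φ '' s).finrank K + Module.finrank K (⨅ i ∈ s, LinearMap.ker (φ i) : Submodule K V) =
      Module.finrank K V := by
  have hcoann : (⨅ i ∈ s, LinearMap.ker (φ i)) =
      (Submodule.span K (φ '' s)).dualCoannihilator := by
    refine SetLike.coe_injective ?_
    ext x
    simp [Submodule.coe_dualCoannihilator_span]
  rw [hcoann]
  exact Subspace.finrank_add_finrank_dualCoannihilator_eq _

theorem linearIndepOn_iff_finrank_iInf_ker_add_card (φ : ι → Module.Dual K V) (s : Finset ι) :
    LinearIndepOn K φ s ↔
      Module.finrank K (⨅ i ∈ s, LinearMap.ker (φ i) : Submodule K V) + s.card =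
        Module.finrank K V := by
  rw [LinearIndepOn, linearIndependent_iff_card_eq_finrank_span, ← Set.image_eq_range,
    ← finrank_image_add_finrank_iInf_ker φ s, add_comm, ← Fintype.card_coe s]
  exact (add_left_inj _).symm

end LinearFunctionals

theorem exists_dotProduct_ne_zero_of_notMem {K σ : Type*} [Field K] [Fintype σ]
    {W : Submodule K (σ → K)} {v : σ → K} (hv : v ∉ W) :
    ∃ l : σ → K, l ⬝ᵥ v ≠ 0 ∧ ∀ u ∈ W, l ⬝ᵥ u = 0 := by
  classical
  obtain ⟨φ, hφv, hφW⟩ := Submodule.exists_le_ker_of_notMem hv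
  obtain ⟨l, rfl⟩ := (dotProductEquiv K σ).surjective φ
  exact ⟨l, hφv, fun u hu => hφW hu⟩

theorem exists_dotProduct_ne_zero {R σ : Type*} [CommSemiring R] [Fintype σ] {v : σ → R}
    (hv : v ≠ 0) : ∃ l : σ → R, l ⬝ᵥ v ≠ 0 := by
  contrapose! hv
  exact dotProduct_eq_zero v fun l => (dotProduct_comm v l).trans (hv l)

theorem finrank_homogeneousSubmodule (σ R : Type*) [Fintype σ] [CommRing R] [Nontrivial R]
    (d : ℕ) :
    Module.finrank R (homogeneousSubmodule σ R d) = (Fintype.card σ).multichoose d := by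
  classical
  have hforms : homogeneousSubmodule σ R d =
      restrictSupport R (Finset.univ.finsuppAntidiag d : Finset (σ →₀ ℕ)) := by
    rw [homogeneousSubmodule_eq_finsupp_supported, restrictSupport]
    congr
    ext m
    simp [Finset.mem_finsuppAntidiag, Finsupp.degree_eq_sum]
  rw [hforms, Module.finrank_eq_card_basis (basisRestrictSupport R _)]
  simp [Finset.card_finsuppAntidiag_nat_eq_multichoose]

section Gradient

variable {R σ : Type*} [CommSemiring R]

/-- The gradient of a polynomial at the point `v`, as a linear function of the polynomial. -/
noncomputable def gradientAt (v : σ → R) : MvPolynomial σ R →ₗ[R] σ → R :=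
  LinearMap.pi fun i => (aeval v).toLinearMap ∘ₗ (pderiv i).toLinearMap

theorem gradientAt_apply (v : σ → R) (f : MvPolynomial σ R) (i : σ) :
    gradientAt v f i = eval v (pderiv i f) := by
  simp [gradientAt, aeval_eq_eval]

theorem gradientAt_mul (v : σ → R) (f g : MvPolynomial σ R) :
    gradientAt v (f * g) = eval v g • gradientAt v f + eval v f • gradientAt v g := by
  ext i
  simp [gradientAt_apply, add_comm]

variable [Fintype σ]

theorem dotProduct_gradientAt_self {d : ℕ} {f : MvPolynomial σ R} (hf : f.IsHomogeneous d)
    (v : σ → R) : v ⬝ᵥ gradientAt v f = d * eval v f := by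
  simpa [dotProduct, gradientAt_apply] using congrArg (eval v) hf.sum_X_mul_pderiv

/-- The linear form with coefficient vector `l`. -/
noncomputable def linearForm (l : σ → R) : MvPolynomial σ R :=
  ∑ i, C (l i) * X i

theorem isHomogeneous_linearForm (l : σ → R) : (linearForm l).IsHomogeneous 1 :=
  IsHomogeneous.sum _ _ _ fun i _ => isHomogeneous_C_mul_X (l i) i

theorem eval_linearForm (l v : σ → R) : eval v (linearForm l) = l ⬝ᵥ v := by
  simp [linearForm, dotProduct]

theorem gradientAt_linearForm (l v : σ → R) : gradientAt v (linearForm l) = l := by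
  classical
  ext i
  simp [gradientAt_apply, linearForm, pderiv_X, Pi.single_apply]

end Gradient

section Contraction

variable {R σ : Type*} [Fintype σ]

/-- The contraction with the linear form `l` of a tangent direction `w` at `v`: if `w` pairs with
gradients at `v` of forms of degree `d + 1`, its contraction pairs with gradients of forms of degree
`d`, as multiplication by `l` dictates. The factor `d` clears the denominator from Euler's identity,
see `contraction_dotProduct_gradientAt`. -/
def contraction [CommSemiring R] (d : ℕ) (l v w : σ → R) : σ → R :=
  (d * (l ⬝ᵥ v)) • w + (l ⬝ᵥ w) • v

theorem contraction_zero_right [CommSemiring R] (d : ℕ) (l v : σ → R) :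
    contraction d l v 0 = 0 := by
  simp [contraction]

theorem contraction_dotProduct_gradientAt [CommSemiring R] {d : ℕ} {f : MvPolynomial σ R}
    (hf : f.IsHomogeneous d) (l v w : σ → R) :
    contraction d l v w ⬝ᵥ gradientAt v f = d * (w ⬝ᵥ gradientAt v (f * linearForm l)) := by
  rw [contraction, add_dotProduct, smul_dotProduct, smul_dotProduct,
    dotProduct_gradientAt_self hf, gradientAt_mul, dotProduct_add, dotProduct_smul,
    dotProduct_smul, eval_linearForm, gradientAt_linearForm, dotProduct_comm l w]
  simp only [smul_eq_mul]
  ring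

theorem eq_zero_of_contraction_eq_zero [CommRing R] [IsDomain R] [CharZero R] {d : ℕ}
    (hd : d ≠ 0) {l v w : σ → R} (hlv : l ⬝ᵥ v ≠ 0) (h : contraction d l v w = 0) : w = 0 := by
  have hlw : l ⬝ᵥ w = 0 := by
    have hpair : ((d + 1 : ℕ) : R) * (l ⬝ᵥ v) * (l ⬝ᵥ w) = 0 := by
      calc ((d + 1 : ℕ) : R) * (l ⬝ᵥ v) * (l ⬝ᵥ w) = l ⬝ᵥ contraction d l v w := by
            simp only [contraction, dotProduct_add, dotProduct_smul, smul_eq_mul]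
            push_cast
            ring
        _ = 0 := by rw [h, dotProduct_zero]
    exact (mul_eq_zero.mp hpair).resolve_left
      (mul_ne_zero (Nat.cast_ne_zero.mpr d.succ_ne_zero) hlv)
  rw [contraction, hlw, zero_smul, add_zero] at h
  exact (smul_eq_zero.mp h).resolve_left (mul_ne_zero (Nat.cast_ne_zero.mpr hd) hlv)

end Contraction

section GradientRelation

variable {R ι σ : Type*}

/-- The functional `f ↦ ∂f/∂Xᵢ (v p)` on forms of degree `d`, for `q = (p, i)`. -/
noncomputable def partialDerivFunctional [CommSemiring R] (v : ι → σ → R) (d : ℕ) (q : ι × σ) :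
    Module.Dual R (homogeneousSubmodule σ R d) :=
  LinearMap.proj q.2 ∘ₗ gradientAt (v q.1) ∘ₗ Submodule.subtype _

theorem partialDerivFunctional_apply [CommSemiring R] (v : ι → σ → R) (d : ℕ) (q : ι × σ)
    (f : homogeneousSubmodule σ R d) :
    partialDerivFunctional v d q f = gradientAt (v q.1) f q.2 :=
  rfl

variable [Fintype σ]

/-- The vectors `w p`, for `p ∈ A`, form a linear relation among the gradients at the points
`v p` of all forms of degree `d`. The values of `w` outside `A` are irrelevant. -/
def IsGradientRelation [CommSemiring R] (v : ι → σ → R) (d : ℕ) (A : Finset ι)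
    (w : ι → σ → R) : Prop :=
  ∀ f : MvPolynomial σ R, f.IsHomogeneous d → ∑ p ∈ A, w p ⬝ᵥ gradientAt (v p) f = 0

/-- The gradients at the points `v p`, `p ∈ A`, impose independent conditions on forms of
degree `d`. -/
def GradientsIndependent [CommSemiring R] (v : ι → σ → R) (d : ℕ) (A : Finset ι) : Prop :=
  LinearIndepOn R (partialDerivFunctional v d) (A ×ˢ Finset.univ : Finset (ι × σ))

theorem gradientsIndependent_iff [CommRing R] {v : ι → σ → R} {d : ℕ} {A : Finset ι} :
    GradientsIndependent v d A ↔ ∀ w, IsGradientRelation v d A w → ∀ p ∈ A, w p = 0 := by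
  have hrel (c : ι × σ → R) : ∑ q ∈ A ×ˢ Finset.univ, c q • partialDerivFunctional v d q = 0 ↔
      IsGradientRelation v d A (Function.curry c) := by
    simp [LinearMap.ext_iff, IsGradientRelation, Finset.sum_product, dotProduct,
      partialDerivFunctional_apply]
  rw [GradientsIndependent, linearIndepOn_finset_iff,
    ← (Equiv.curry ι σ R).forall_congr_right]
  simp only [hrel, Equiv.curry_apply, funext_iff, Finset.mem_product, Finset.mem_univ, and_true,
    Prod.forall, Function.curry_apply, Pi.zero_apply]
  tauto

namespace IsGradientRelation

theorem contract [CommSemiring R] {v : ι → σ → R} {d : ℕ} {A : Finset ι} {w : ι → σ → R}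
    (hw : IsGradientRelation v (d + 1) A w) (l : σ → R) :
    IsGradientRelation v d A fun p => contraction d l (v p) (w p) := fun f hf => by
  simp only [contraction_dotProduct_gradientAt hf]
  rw [← Finset.mul_sum, hw _ (hf.mul (isHomogeneous_linearForm l)), mul_zero]

theorem eq_zero_of_apply_eq_zero [CommRing R] {v : ι → σ → R} {d : ℕ} {S : Finset ι}
    {w : ι → σ → R} (hmin : ∀ A ⊂ S, GradientsIndependent v d A)
    (hw : IsGradientRelation v d S w) {q r : ι} (hq : q ∈ S) (hwq : w q = 0) (hr : r ∈ S) :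
    w r = 0 := by
  classical
  obtain rfl | hrq := eq_or_ne r q
  · exact hwq
  have hrel : IsGradientRelation v d (S.erase q) w := fun f hf => by
    rw [Finset.sum_erase _ (by rw [hwq, zero_dotProduct]), hw f hf]
  exact gradientsIndependent_iff.mp (hmin _ (Finset.erase_ssubset hq)) w hrel r
    (Finset.mem_erase.mpr ⟨hrq, hr⟩)

theorem apply_eq_zero_of_contraction_eq_zero [CommRing R] [IsDomain R] [CharZero R]
    {v : ι → σ → R} {d : ℕ} (hd : d ≠ 0) {S : Finset ι} {w : ι → σ → R}
    (hmin : ∀ A ⊂ S, GradientsIndependent v d A) (hw : IsGradientRelation v (d + 1) S w)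
    {l : σ → R} {q r : ι} (hq : q ∈ S) (hlq : contraction d l (v q) (w q) = 0)
    (hr : r ∈ S) (hlr : l ⬝ᵥ v r ≠ 0) : w r = 0 :=
  eq_zero_of_contraction_eq_zero hd hlr ((hw.contract l).eq_zero_of_apply_eq_zero hmin hq hlq hr)

theorem mem_span_pair [Field R] [CharZero R] {v : ι → σ → R} {d : ℕ} (hd : d ≠ 0)
    {S : Finset ι} {w : ι → σ → R} (hmin : ∀ A ⊂ S, GradientsIndependent v d A)
    (hw : IsGradientRelation v (d + 1) S w) {p : ι} (hp : p ∈ S) (hvp : v p ≠ 0) (hwp : w p ≠ 0)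
    {r : ι} (hr : r ∈ S) : v r ∈ Submodule.span R {v p, w p} := by
  by_contra hline
  have hwr : w r = 0 := by
    obtain ⟨l, hlr, hl⟩ := exists_dotProduct_ne_zero_of_notMem hline
    refine hw.apply_eq_zero_of_contraction_eq_zero hd hmin hp ?_ hr hlr
    rw [contraction, hl _ (Submodule.subset_span (by simp)),
      hl _ (Submodule.subset_span (by simp)), mul_zero, zero_smul, zero_smul, add_zero]
  obtain ⟨l, hlp⟩ := exists_dotProduct_ne_zero hvp
  refine hwp (hw.apply_eq_zero_of_contraction_eq_zero hd hmin hr ?_ hp hlp)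
  rw [hwr, contraction_zero_right]

end IsGradientRelation

namespace GradientsIndependent

theorem succ [CommRing R] [IsDomain R] [CharZero R] {v : ι → σ → R} {d : ℕ} (hd : d ≠ 0)
    {A : Finset ι} (hv : ∀ p ∈ A, v p ≠ 0) (h : GradientsIndependent v d A) :
    GradientsIndependent v (d + 1) A := by
  refine gradientsIndependent_iff.mpr fun w hw p hp => ?_
  obtain ⟨l, hl⟩ := exists_dotProduct_ne_zero (hv p hp)
  exact eq_zero_of_contraction_eq_zero hd hl
    (gradientsIndependent_iff.mp h _ (hw.contract l) p hp)

theorem mono_degree [CommRing R] [IsDomain R] [CharZero R] {v : ι → σ → R} {d t : ℕ}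
    (hd : d ≠ 0) {A : Finset ι} (hv : ∀ p ∈ A, v p ≠ 0) (h : GradientsIndependent v d A)
    (hdt : d ≤ t) : GradientsIndependent v t A := by
  induction t, hdt using Nat.le_induction with
  | base => exact h
  | succ t hdt ih => exact ih.succ (by lia) hv

theorem succ_of_forall_ssubset [Field R] [CharZero R] {v : ι → σ → R} {d : ℕ} (hd : d ≠ 0)
    {S : Finset ι} (hv : ∀ p ∈ S, v p ≠ 0) (hrank : 2 < (v '' S).finrank R)
    (hmin : ∀ A ⊂ S, GradientsIndependent v d A) : GradientsIndependent v (d + 1) S := by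
  classical
  refine gradientsIndependent_iff.mpr fun w hw p hp => ?_
  by_contra hwp
  have hline : Submodule.span R (v '' S) ≤ Submodule.span R {v p, w p} := by
    rw [Submodule.span_le]
    rintro _ ⟨r, hr, rfl⟩
    exact hw.mem_span_pair hd hmin hp (hv p hp) hwp hr
  have hpair : Module.finrank R (Submodule.span R {v p, w p}) ≤ 2 := by
    rw [← Finset.coe_pair]
    exact (finrank_span_finset_le_card _).trans Finset.card_le_two
  exact absurd ((Submodule.finrank_mono hline).trans hpair) hrank.not_ge

end GradientsIndependent

end GradientRelation

section Terracini

variable {k : Type*} [Field k] {n d t x : ℕ} {S : Finset (ProjSpace k n)}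

theorem mem_doubleVanishing_iff {m : ℕ} {v : Fin m → k} {f : MvPolynomial (Fin m) k} :
    f ∈ doubleVanishing k v ↔ eval v f = 0 ∧ gradientAt v f = 0 := by
  simp [doubleVanishing, evalLM, aeval_eq_eval, funext_iff, gradientAt_apply]

theorem mem_doubleVanishing_iff_gradientAt_eq_zero [CharZero k] (hd : d ≠ 0) {m : ℕ}
    {v : Fin m → k} {f : MvPolynomial (Fin m) k} (hf : f.IsHomogeneous d) :
    f ∈ doubleVanishing k v ↔ gradientAt v f = 0 := by
  refine mem_doubleVanishing_iff.trans (and_iff_right_of_imp fun hgrad => ?_)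
  have heuler := dotProduct_gradientAt_self hf v
  rw [hgrad, dotProduct_zero] at heuler
  exact (mul_eq_zero.mp heuler.symm).resolve_left (Nat.cast_ne_zero.mpr hd)

theorem h0_eq_finrank_iInf_ker [CharZero k] (hd : d ≠ 0) (A : Finset (ProjSpace k n)) :
    h0 k n d A = Module.finrank k
      (⨅ q ∈ A ×ˢ Finset.univ, LinearMap.ker (partialDerivFunctional Projectivization.rep d q) :
        Submodule k (homogeneousSubmodule (Fin (n + 1)) k d)) := by
  have hcomap : (⨅ p ∈ A, doubleVanishing k p.rep).comap
        (homogeneousSubmodule (Fin (n + 1)) k d).subtype =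
      ⨅ q ∈ A ×ˢ Finset.univ, LinearMap.ker (partialDerivFunctional Projectivization.rep d q) := by
    ext f
    simp only [Submodule.mem_comap, Submodule.mem_iInf, Submodule.subtype_apply,
      mem_doubleVanishing_iff_gradientAt_eq_zero hd f.2, funext_iff, Pi.zero_apply,
      LinearMap.mem_ker, partialDerivFunctional_apply, Finset.mem_product, Finset.mem_univ,
      and_true, Prod.forall]
    tauto
  rw [h0, ← hcomap, ← Submodule.map_comap_subtype, Submodule.finrank_map_subtype_eq]

theorem finrank_homogeneousSubmodule_fin (k : Type*) [Field k] (n d : ℕ) :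
    Module.finrank k (homogeneousSubmodule (Fin (n + 1)) k d) = (n + d).choose n := by
  rw [finrank_homogeneousSubmodule, Fintype.card_fin, Nat.multichoose_eq, Nat.choose_symm_add]
  congr 1
  lia

theorem h1_eq_zero_iff_gradientsIndependent [CharZero k] (hd : d ≠ 0)
    {A : Finset (ProjSpace k n)} :
    h1 k n d A = 0 ↔ GradientsIndependent Projectivization.rep d A := by
  have : FiniteDimensional k (homogeneousSubmodule (Fin (n + 1)) k d) :=
    .of_fg (homogeneousSubmodule_fg _ _ _)
  rw [GradientsIndependent, linearIndepOn_iff_finrank_iInf_ker_add_card,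
    ← h0_eq_finrank_iInf_ker hd, finrank_homogeneousSubmodule_fin, h1,
    Finset.card_product, Finset.card_univ, Fintype.card_fin]
  push_cast [← Int.natCast_inj]
  rw [sub_eq_zero, mul_comm]

theorem Spans.nonempty (hS : Spans k n S) : S.Nonempty := by
  rw [Finset.nonempty_iff_ne_empty]
  rintro rfl
  simp [Spans] at hS

theorem Spans.finrank_eq (hS : Spans k n S) :
    (Projectivization.rep '' (S : Set (ProjSpace k n))).finrank k = n + 1 := by
  rw [Set.finrank, hS, finrank_top, Module.finrank_fin_fun]

theorem h0_degree_zero (hS : S.Nonempty) : h0 k n 0 S = 0 := by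
  obtain ⟨p, hp⟩ := hS
  have hbot : homogeneousSubmodule (Fin (n + 1)) k 0 ⊓ ⨅ p ∈ S, doubleVanishing k p.rep = ⊥ := by
    rw [eq_bot_iff, homogeneousSubmodule_zero]
    rintro f ⟨hf, hvanish⟩
    obtain ⟨c, rfl⟩ := Submodule.mem_one.mp hf
    simp only [SetLike.mem_coe, Submodule.mem_iInf, mem_doubleVanishing_iff] at hvanish
    simpa using (hvanish p hp).1
  rw [h0, hbot, finrank_bot]

theorem degree_ne_zero_of_mem_terracini (hS : S ∈ Terracini k n d x) : d ≠ 0 := by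
  rintro rfl
  obtain ⟨-, hspan, hh0, -⟩ := hS
  exact hh0.ne' (h0_degree_zero hspan.nonempty)

theorem h1_eq_zero_of_mem_minTerracini_of_lt [CharZero k] (hn : 2 ≤ n)
    (hS : S ∈ minTerracini k n d x) (hdt : d < t) : h1 k n t S = 0 := by
  obtain ⟨hT, hmin⟩ := hS
  have hd : d ≠ 0 := degree_ne_zero_of_mem_terracini hT
  have hrep : ∀ p ∈ S, p.rep ≠ 0 := fun p _ => p.rep_nonzero
  have hrank : 2 < (Projectivization.rep '' (S : Set (ProjSpace k n))).finrank k := by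
    rw [hT.2.1.finrank_eq]
    lia
  have hsucc : GradientsIndependent Projectivization.rep (d + 1) S :=
    .succ_of_forall_ssubset hd hrep hrank fun A hA =>
      (h1_eq_zero_iff_gradientsIndependent hd).mp (hmin A hA)
  exact (h1_eq_zero_iff_gradientsIndependent (by lia)).mpr
    (hsucc.mono_degree d.succ_ne_zero hrep hdt)

theorem le_of_mem_minTerracini_of_h1_pos [CharZero k] (hn : 2 ≤ n)
    (hS : S ∈ minTerracini k n d x) (ht : 0 < h1 k n t S) : t ≤ d :=
  not_lt.mp fun hdt => ht.ne' (h1_eq_zero_of_mem_minTerracini_of_lt hn hS hdt)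

end Terracini

theorem minTerracini_degree_unique_general
    (k : Type*) [Field k] [CharZero k] (n d x : ℕ) (hn : 2 ≤ n)
    (S : Finset (ProjSpace k n)) (hS : S ∈ minTerracini k n d x) :
    h1 k n (d + 1) S = 0 ∧
    (∀ t : ℕ, d + 1 ≤ t → S ∉ Terracini k n t x) ∧
    (∀ t : ℕ, 1 ≤ t → t ≤ d - 1 → S ∉ minTerracini k n t x) ∧
    (∀ t : ℕ, S ∈ minTerracini k n t x → t = d) ∧
    IsGreatest {t : ℕ | 0 < h1 k n t S} d := by
  have hle : ∀ {t}, 0 < h1 k n t S → t ≤ d := le_of_mem_minTerracini_of_h1_pos hn hS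
  have hpos : 0 < h1 k n d S := hS.1.2.2.2
  have hunique : ∀ t, S ∈ minTerracini k n t x → t = d := fun t ht =>
    (hle ht.1.2.2.2).antisymm (le_of_mem_minTerracini_of_h1_pos hn ht hpos)
  refine ⟨h1_eq_zero_of_mem_minTerracini_of_lt hn hS d.lt_succ_self, ?_, ?_, hunique, hpos,
    fun t => hle⟩
  · intro t hdt ht
    exact absurd (hle ht.2.2.2) (by lia)
  · intro t ht1 htd ht
    exact absurd (hunique t ht) (by lia)

/-- Theorem (uniqueness of the minimally Terracini degree).
If `S ∈ T(n,d;x)'` then: (i) `h^1(I_{2S}(d+1)) = 0`; (ii) `S ∉ T(n,t;x)` for `t ≥ d+1`;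
(iii) `S ∉ T(n,t;x)'` for `1 ≤ t ≤ d-1`. In particular `d` is the unique degree for which
`S` is minimally Terracini, and `d` is the greatest `t` with `h^1(I_{2S}(t)) > 0`. -/
theorem minTerracini_degree_unique
    (k : Type*) [Field k] [IsAlgClosed k] [CharZero k]
    (n d x : ℕ) (hn : 2 ≤ n) (hd : 1 ≤ d) (hx : 1 ≤ x)
    (S : Finset (ProjSpace k n)) (hS : S ∈ minTerracini k n d x) :
    h1 k n (d + 1) S = 0 ∧
    (∀ t : ℕ, d + 1 ≤ t → S ∉ Terracini k n t x) ∧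
    (∀ t : ℕ, 1 ≤ t → t ≤ d - 1 → S ∉ minTerracini k n t x) ∧
    (∀ t : ℕ, S ∈ minTerracini k n t x → t = d) ∧
    IsGreatest {t : ℕ | 0 < h1 k n t S} d := by
  exact minTerracini_degree_unique_general k n d x hn S hS
end

section
/- For every positive integer x, T(3,3;x)' = ∅; that is, there is no minimally Terracini finite set in P^3 with respect to O(3). -/
open MvPolynomial

/-!
A minimally Terracini set `S` for cubics in `P^3` has at least four points because it spans. It has
at most five: a proper subset with five points has `h^1 = 0`, hence `h^0 = 20 - 4 * 5 = 0`, and then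
no cubic is singular along `S` either.

In coordinates where four points of `S` are the coordinate points, a cubic `G` singular at them has
no monomial divisible by a square, so `G = ∑ i, c i * ∏ j ≠ i, X j`. If `#S = 4`, this gives
`h^0 ≤ 4`, that is, `h^1 ≤ 0`. If `#S = 5`, no four points of `S` are coplanar: otherwise the plane
times the quadrics through the four points would be a space of cubics of dimension at least six,
contradicting `h^1 = 0`. Hence all coordinates of the fifth point `a` are nonzero. Since
`G - X j * ∂G/∂X j = c j * ∏ i ≠ j, X i`, singularity of `G` at `a` forces every `c j` to vanish,
and `h^0 = 0`.
-/

lemma finrank_le_finrank_inf_ker_add {k V V' : Type*} [Field k] [AddCommGroup V] [Module k V]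
    [AddCommGroup V'] [Module k V'] [Module.Finite k V'] (W : Submodule k V) [Module.Finite k W]
    (f : V →ₗ[k] V') :
    Module.finrank k W ≤ Module.finrank k ↥(W ⊓ LinearMap.ker f) + Module.finrank k V' := by
  rw [← (f.domRestrict W).finrank_range_add_finrank_ker, LinearMap.ker_domRestrict,
    ← Submodule.map_comap_subtype, Submodule.finrank_map_subtype_eq, add_comm]
  exact Nat.add_le_add_left (Submodule.finrank_le _) _

section Polynomials

variable {R σ τ : Type*}

lemma pderiv_bind₁ [CommSemiring R] [Fintype σ] (f : σ → MvPolynomial τ R)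
    (F : MvPolynomial σ R) (j : τ) :
    pderiv j (bind₁ f F) = ∑ i, bind₁ f (pderiv i F) * pderiv j (f i) := by
  classical
  induction F using MvPolynomial.induction_on with
  | C a => simp
  | add p q hp hq => simp [hp, hq, add_mul, Finset.sum_add_distrib]
  | mul_X p l hp =>
    simp [hp, pderiv_X, Pi.single_apply, add_mul, Finset.sum_add_distrib, Finset.mul_sum,
      apply_ite, mul_assoc]

lemma finrank_homogeneousSubmodule_s6 [CommRing R] [Nontrivial R] (n d : ℕ) :
    Module.finrank R (homogeneousSubmodule (Fin (n + 1)) R d) = (n + d).choose n := by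
  have degree_eq_finsuppAntidiag : {m : Fin (n + 1) →₀ ℕ | m.degree = d} =
      (Finset.univ.finsuppAntidiag d : Finset (Fin (n + 1) →₀ ℕ)) := by
    ext m
    simp [Finsupp.degree_eq_sum]
  rw [homogeneousSubmodule_eq_finsupp_supported]
  change Module.finrank R (restrictSupport R _) = _
  rw [Module.finrank_eq_nat_card_basis (basisRestrictSupport R _), degree_eq_finsuppAntidiag,
    Nat.card_coe_set_eq, Set.ncard_coe_finset, Finset.card_finsuppAntidiag_nat_eq_choose,
    Finset.card_fin, Nat.add_right_comm, Nat.add_sub_cancel, Nat.choose_symm_add]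

lemma exists_isHomogeneous_one_eval_eq [CommSemiring R] [Finite σ] (φ : (σ → R) →ₗ[R] R) :
    ∃ L : MvPolynomial σ R, L.IsHomogeneous 1 ∧ ∀ v, eval v L = φ v := by
  classical
  cases nonempty_fintype σ
  refine ⟨∑ i, C (φ (Pi.single i 1)) * X i,
    IsHomogeneous.sum _ _ _ fun i _ => isHomogeneous_C_mul_X _ _, fun v => ?_⟩
  conv_rhs => rw [← (Pi.basisFun R σ).sum_repr v]
  simp [mul_comm]

lemma eval_piSingle_of_isHomogeneous [CommSemiring R] [Finite σ] [DecidableEq σ]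
    {G : MvPolynomial σ R} {d : ℕ} (hG : G.IsHomogeneous d) (i : σ) :
    eval (Pi.single i 1) G = coeff (Finsupp.single i d) G := by
  cases nonempty_fintype σ
  have eq_single {m : σ →₀ ℕ} (hm : m ∈ G.support) (h : ∀ j ≠ i, m j = 0) :
      m = Finsupp.single i d := by
    have hsingle : m = Finsupp.single i (m i) :=
      Finsupp.support_subset_singleton.1 fun j hj => by
        by_contra hji
        exact Finsupp.mem_support_iff.1 hj (h j (by simpa using hji))
    have hdeg : d = m i := by
      rw [hG.degree_eq_sum_deg_support hm, ← Finsupp.degree_apply, hsingle]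
      simp
    rwa [hdeg]
  rw [eval_eq', Finset.sum_eq_single (Finsupp.single i d)]
  · rw [Finset.prod_eq_one, mul_one]
    intro j _
    rcases eq_or_ne j i with rfl | hj
    · simp
    · simp [hj]
  · intro m hm hne
    obtain ⟨j, hji, hmj⟩ : ∃ j ≠ i, m j ≠ 0 := by
      by_contra! h
      exact hne (eq_single hm h)
    rw [Finset.prod_eq_zero (Finset.mem_univ j), mul_zero]
    simp [hji, hmj]
  · intro h
    rw [notMem_support_iff.1 h, zero_mul]

end Polynomials

section ComplMonomial

variable {σ : Type*} [Fintype σ] [DecidableEq σ] (R : Type*) [CommSemiring R]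

/-- The squarefree monomial `∏ j ≠ i, X j`. In four variables these span the cubics that are
singular at the four coordinate points. -/
noncomputable def complMonomial (i : σ) : MvPolynomial σ R :=
  ∏ j ∈ {i}ᶜ, X j

lemma complMonomial_eq_monomial (i : σ) :
    complMonomial R i = monomial (∑ j ∈ {i}ᶜ, Finsupp.single j 1) 1 :=
  (monomial_sum_one _ _).symm

lemma X_mul_pderiv_complMonomial (i j : σ) :
    X j * pderiv j (complMonomial R i) = if j = i then 0 else complMonomial R i := by
  have exponent_apply : (∑ l ∈ {i}ᶜ, Finsupp.single l 1 : σ →₀ ℕ) j = if j = i then 0 else 1 := by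
    simp [Finsupp.finsetSum_apply, Finsupp.single_apply]
  rw [complMonomial_eq_monomial, X_mul_pderiv_monomial, exponent_apply]
  split_ifs <;> simp

lemma exists_eq_sum_compl_single {m : σ →₀ ℕ} (hle : ∀ i, m i ≤ 1)
    (hdeg : m.degree + 1 = Fintype.card σ) :
    ∃ i, m = ∑ j ∈ {i}ᶜ, Finsupp.single j 1 := by
  have eq_one {j : σ} (hj : j ∈ m.support) : m j = 1 :=
    (hle j).antisymm (Nat.one_le_iff_ne_zero.2 (Finsupp.mem_support_iff.1 hj))
  have card_support : m.support.card = m.degree := by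
    rw [Finsupp.degree_apply, Finset.sum_congr rfl fun j hj => eq_one hj, Finset.card_eq_sum_ones]
  obtain ⟨i, hi⟩ : ∃ i, m.supportᶜ = {i} :=
    Finset.card_eq_one.1 (by rw [Finset.card_compl]; omega)
  refine ⟨i, ?_⟩
  rw [← hi, compl_compl]
  conv_lhs => rw [← m.sum_single]
  exact Finset.sum_congr rfl fun j hj => by rw [eq_one hj]

variable {R}

lemma mem_span_range_complMonomial {G : MvPolynomial σ R} {d : ℕ} (hG : G.IsHomogeneous d)
    (hd : d + 1 = Fintype.card σ) (hsq : ∀ m ∈ G.support, ∀ i, m i ≤ 1) :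
    G ∈ Submodule.span R (Set.range (complMonomial R : σ → MvPolynomial σ R)) := by
  rw [G.as_sum]
  refine Submodule.sum_mem _ fun m hm => ?_
  obtain ⟨i, rfl⟩ := exists_eq_sum_compl_single (hsq m hm)
    (by rw [← hd, hG.degree_eq_sum_deg_support hm, Finsupp.degree_apply])
  rw [← mul_one (coeff _ G), ← smul_eq_mul, ← smul_monomial, ← complMonomial_eq_monomial]
  exact Submodule.smul_mem _ _ (Submodule.subset_span ⟨i, rfl⟩)

end ComplMonomial

section DoubleVanishing

variable {k : Type*} [Field k] {n : ℕ}

lemma mem_doubleVanishing {v : Fin n → k} {F : MvPolynomial (Fin n) k} :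
    F ∈ doubleVanishing k v ↔ eval v F = 0 ∧ ∀ i, eval v (pderiv i F) = 0 := by
  simp [doubleVanishing, evalLM, Submodule.mem_iInf, aeval_eq_eval]

lemma mul_mem_doubleVanishing {v : Fin n → k} {F G : MvPolynomial (Fin n) k}
    (hF : eval v F = 0) (hG : eval v G = 0) : F * G ∈ doubleVanishing k v := by
  simp [mem_doubleVanishing, hF, hG]

lemma bind₁_mem_doubleVanishing {m : ℕ} (f : Fin n → MvPolynomial (Fin m) k) {v : Fin m → k}
    {F : MvPolynomial (Fin n) k} (hF : F ∈ doubleVanishing k fun i => eval v (f i)) :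
    bind₁ f F ∈ doubleVanishing k v := by
  have eval_bind₁ (G : MvPolynomial (Fin n) k) :
      eval v (bind₁ f G) = eval (fun i => eval v (f i)) G :=
    eval₂Hom_bind₁ _ _ _ _
  obtain ⟨hval, hderiv⟩ := mem_doubleVanishing.1 hF
  refine mem_doubleVanishing.2 ⟨by rw [eval_bind₁, hval], fun j => ?_⟩
  simp [pderiv_bind₁, eval_bind₁, hderiv]

lemma coeff_eq_zero_of_mem_doubleVanishing_single {G : MvPolynomial (Fin n) k} {d : ℕ}
    (hG : G.IsHomogeneous d) {i : Fin n} (h : G ∈ doubleVanishing k (Pi.single i 1))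
    {m : Fin n →₀ ℕ} (hm : d ≤ m i + 1) : coeff m G = 0 := by
  by_cases hdeg : m.degree = d
  swap
  · exact hG.coeff_eq_zero hdeg
  obtain ⟨hval, hderiv⟩ := mem_doubleVanishing.1 h
  have split : Finsupp.single i (m i) + m.erase i = m := Finsupp.single_add_erase i m
  have degree_split : m i + (m.erase i).degree = d := by
    rw [← hdeg, ← congrArg Finsupp.degree split, map_add, Finsupp.degree_single]
  rcases (by omega : (m.erase i).degree = 0 ∨ (m.erase i).degree = 1) with hzero | hone
  · rw [← split, (Finsupp.degree_eq_zero_iff _).1 hzero, add_zero,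
      show m i = d by omega, ← eval_piSingle_of_isHomogeneous hG, hval]
  · obtain ⟨j, hj⟩ := (Finsupp.sum_eq_one_iff _).1 hone
    have hji : j ≠ i := by
      rintro rfl
      simpa using DFunLike.congr_fun hj j
    have hcoeff := hderiv j
    rw [eval_piSingle_of_isHomogeneous hG.pderiv, coeff_pderiv,
      Finsupp.single_eq_of_ne hji, ← hj, show d - 1 = m i by omega, split] at hcoeff
    simpa using hcoeff

lemma eq_zero_of_mem_span_complMonomial {G : MvPolynomial (Fin n) k}
    (hG : G ∈ Submodule.span k (Set.range (complMonomial k))) {a : Fin n → k}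
    (ha : ∀ i, a i ≠ 0) (h : G ∈ doubleVanishing k a) : G = 0 := by
  obtain ⟨c, rfl⟩ := Submodule.mem_span_range_iff_exists_fun k |>.1 hG
  set G := ∑ i, c i • complMonomial k i
  obtain ⟨hval, hderiv⟩ := mem_doubleVanishing.1 h
  refine Finset.sum_eq_zero fun j _ => ?_
  have sub_X_mul_pderiv : G - X j * pderiv j G = c j • complMonomial k j := by
    have pderiv_eq : X j * pderiv j G = ∑ i, if j = i then 0 else c i • complMonomial k i := by
      simp [G, Finset.mul_sum, X_mul_pderiv_complMonomial]
    rw [pderiv_eq, ← Finset.sum_sub_distrib, Finset.sum_eq_single j] <;> grind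
  have eval_eq_zero : c j * ∏ i ∈ {j}ᶜ, a i = 0 := by
    simpa [hval, hderiv, complMonomial] using (congrArg (eval a) sub_X_mul_pderiv).symm
  have hc : c j = 0 :=
    (mul_eq_zero.1 eval_eq_zero).resolve_right (Finset.prod_ne_zero_iff.2 fun i _ => ha i)
  rw [hc, zero_smul]

lemma mem_span_complMonomial_of_mem_doubleVanishing_single {G : MvPolynomial (Fin 4) k}
    (hG : G.IsHomogeneous 3) (h : ∀ i, G ∈ doubleVanishing k (Pi.single i 1)) :
    G ∈ Submodule.span k (Set.range (complMonomial k)) := by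
  refine mem_span_range_complMonomial hG rfl fun m hm i => ?_
  by_contra! hmi
  exact mem_support_iff.1 hm
    (coeff_eq_zero_of_mem_doubleVanishing_single hG (h i) (Nat.succ_le_succ hmi))

end DoubleVanishing

section InCoordinates

variable {k : Type*} [Field k] {n : ℕ} (b : Module.Basis (Fin n) k (Fin n → k))

/-- The polynomial function `F` expressed in the coordinates of the basis `b`, that is,
`c ↦ F (∑ i, c i • b i)`. It moves the points `b i` to the coordinate points. -/
noncomputable def inCoordinates : MvPolynomial (Fin n) k →ₐ[k] MvPolynomial (Fin n) k :=
  bind₁ ((Pi.basisFun k (Fin n)).toMatrix b).toMvPolynomial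

lemma inCoordinates_injective : Function.Injective (inCoordinates b) := by
  refine Function.LeftInverse.injective
    (g := bind₁ (b.toMatrix (Pi.basisFun k (Fin n))).toMvPolynomial) fun F => ?_
  have inverse : (fun i => bind₁ (b.toMatrix (Pi.basisFun k (Fin n))).toMvPolynomial
      (((Pi.basisFun k (Fin n)).toMatrix b).toMvPolynomial i)) = X := by
    ext1 i
    rw [← Matrix.toMvPolynomial_mul, Module.Basis.toMatrix_mul_toMatrix_flip,
      Matrix.toMvPolynomial_one]
  rw [inCoordinates, bind₁_bind₁, inverse, bind₁_X_left, AlgHom.id_apply]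

variable {b}

lemma isHomogeneous_inCoordinates {F : MvPolynomial (Fin n) k} {d : ℕ} (hF : F.IsHomogeneous d) :
    (inCoordinates b F).IsHomogeneous d :=
  one_mul d ▸ hF.aeval _ (Matrix.toMvPolynomial_isHomogeneous _)

lemma inCoordinates_mem_doubleVanishing {F : MvPolynomial (Fin n) k} {v : Fin n → k}
    (hF : F ∈ doubleVanishing k v) : inCoordinates b F ∈ doubleVanishing k (b.equivFun v) := by
  refine bind₁_mem_doubleVanishing _ ?_
  convert hF with i
  rw [Matrix.toMvPolynomial_eval_eq_apply, Module.Basis.equivFun_apply,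
    Module.Basis.toMatrix_mulVec_repr, Pi.basisFun_repr]

lemma inCoordinates_mem_span_complMonomial {b : Module.Basis (Fin 4) k (Fin 4 → k)}
    {F : MvPolynomial (Fin 4) k} (hF : F.IsHomogeneous 3) (h : ∀ i, F ∈ doubleVanishing k (b i)) :
    inCoordinates b F ∈ Submodule.span k (Set.range (complMonomial k)) := by
  refine mem_span_complMonomial_of_mem_doubleVanishing_single
    (isHomogeneous_inCoordinates hF) fun i => ?_
  have equivFun_self : b.equivFun (b i) = Pi.single i 1 := by
    ext j
    rw [Module.Basis.equivFun_self, Pi.single_apply]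
    simp only [eq_comm]
  exact equivFun_self ▸ inCoordinates_mem_doubleVanishing (h i)

end InCoordinates

section Spans

variable {k : Type*} [Field k] {n : ℕ} {S : Finset (ProjSpace k n)}

lemma rep_injective : Function.Injective (Projectivization.rep : ProjSpace k n → _) := by
  intro p q h
  rw [← p.mk_rep, ← q.mk_rep]
  congr

lemma succ_le_card_of_spans (hS : Spans k n S) : n + 1 ≤ S.card := by
  classical
  have hle := finrank_span_finset_le_card (R := k) (S.image Projectivization.rep)
  rw [Finset.coe_image, Set.finrank, hS, finrank_top, Module.finrank_fin_fun] at hle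
  exact hle.trans Finset.card_image_le

lemma eq_zero_of_spans {φ : Module.Dual k (Fin (n + 1) → k)} (hS : Spans k n S)
    (h : ∀ p ∈ S, φ p.rep = 0) : φ = 0 := by
  refine LinearMap.ext_on hS ?_
  rintro _ ⟨p, hp, rfl⟩
  exact h p hp

lemma exists_linear_form_of_not_spans (hS : ¬ Spans k n S) :
    ∃ L : MvPolynomial (Fin (n + 1)) k,
      L ≠ 0 ∧ L.IsHomogeneous 1 ∧ ∀ p ∈ S, eval p.rep L = 0 := by
  obtain ⟨φ, hφ, hker⟩ := Submodule.exists_le_ker_of_lt_top _ (lt_top_iff_ne_top.2 hS)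
  obtain ⟨L, hL, heval⟩ := exists_isHomogeneous_one_eval_eq φ
  refine ⟨L, ?_, hL, fun p hp => ?_⟩
  · rintro rfl
    exact hφ (LinearMap.ext fun v => by simpa using (heval v).symm)
  · rw [heval]
    exact hker (Submodule.subset_span ⟨p, hp, rfl⟩)

lemma exists_basis_range_eq_of_spans (hS : Spans k n S) (hcard : S.card = n + 1) :
    ∃ b : Module.Basis (Fin (n + 1)) k (Fin (n + 1) → k),
      Set.range b = Projectivization.rep '' (S : Set (ProjSpace k n)) := by
  let e : Fin (n + 1) ≃ S := (S.equivFinOfCardEq hcard).symm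
  have range_eq : Set.range (fun i => (e i).1.rep) =
      Projectivization.rep '' (S : Set (ProjSpace k n)) := by
    rw [Set.image_eq_range]
    exact e.surjective.range_comp fun p : S => p.1.rep
  refine ⟨basisOfTopLeSpanOfCardEqFinrank _ (range_eq ▸ hS.ge) (by simp), ?_⟩
  rw [coe_basisOfTopLeSpanOfCardEqFinrank, range_eq]

lemma exists_basis_equivFun_ne_zero [DecidableEq (ProjSpace k n)]
    (hcard : S.card = n + 2) (hspans : ∀ p ∈ S, Spans k n (S.erase p)) :
    ∃ b : Module.Basis (Fin (n + 1)) k (Fin (n + 1) → k), ∃ p ∈ S,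
      (∀ i, ∃ q ∈ S, q.rep = b i) ∧ ∀ i, b.equivFun p.rep i ≠ 0 := by
  obtain ⟨p, hp⟩ : S.Nonempty := Finset.card_pos.1 (by omega)
  obtain ⟨b, hb⟩ := exists_basis_range_eq_of_spans (hspans p hp)
    (by rw [Finset.card_erase_of_mem hp, hcard]; rfl)
  have exists_rep_eq (i) : ∃ q ∈ S.erase p, q.rep = b i := by
    have hmem : b i ∈ Projectivization.rep '' (S.erase p : Set (ProjSpace k n)) :=
      hb ▸ Set.mem_range_self i
    exact hmem
  refine ⟨b, p, hp, fun i => ?_, fun i hpi => ?_⟩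
  · obtain ⟨q, hq, hqi⟩ := exists_rep_eq i
    exact ⟨q, Finset.mem_of_mem_erase hq, hqi⟩
  · obtain ⟨q, hq, hqi⟩ := exists_rep_eq i
    have coord_eq_zero : ∀ r ∈ S.erase q, b.coord i r.rep = 0 := by
      intro r hr
      obtain ⟨hrq, hrS⟩ := Finset.mem_erase.1 hr
      rcases eq_or_ne r p with rfl | hrp
      · exact hpi
      · obtain ⟨l, hl⟩ : r.rep ∈ Set.range b := by
          rw [hb]
          exact ⟨r, Finset.mem_erase.2 ⟨hrp, hrS⟩, rfl⟩
        have hli : l ≠ i := by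
          rintro rfl
          exact hrq (rep_injective (hl.symm.trans hqi.symm))
        rw [← hl, Module.Basis.coord_apply, Module.Basis.repr_self,
          Finsupp.single_eq_of_ne hli.symm]
    have coord_zero : b.coord i = 0 :=
      eq_zero_of_spans (hspans q (Finset.mem_of_mem_erase hq)) coord_eq_zero
    simpa using LinearMap.congr_fun coord_zero (b i)

end Spans

section SingularForms

variable {k : Type*} [Field k] {n d : ℕ} {S : Finset (ProjSpace k n)}

variable (d S) in
/-- The space `H^0(I_{2S}(d))` of forms of degree `d` that are singular at every point of `S`;
its dimension is `h0 k n d S` by definition. -/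
noncomputable def singularForms : Submodule k (MvPolynomial (Fin (n + 1)) k) :=
  homogeneousSubmodule (Fin (n + 1)) k d ⊓ ⨅ p ∈ S, doubleVanishing k p.rep

lemma mem_singularForms {F : MvPolynomial (Fin (n + 1)) k} :
    F ∈ singularForms d S ↔ F.IsHomogeneous d ∧ ∀ p ∈ S, F ∈ doubleVanishing k p.rep := by
  simp [singularForms, Submodule.mem_iInf]

instance : Module.Finite k (homogeneousSubmodule (Fin n) k d) :=
  Module.Finite.iff_fg.2 (homogeneousSubmodule_fg _ _ _)

instance : Module.Finite k (singularForms d S) :=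
  Submodule.finiteDimensional_of_le inf_le_left

lemma h0_anti {A : Finset (ProjSpace k n)} (hAS : A ⊆ S) : h0 k n d S ≤ h0 k n d A :=
  Submodule.finrank_mono (inf_le_inf_left _ (biInf_mono hAS))

lemma choose_le_h0_succ_add_card_of_not_spans (hS : ¬ Spans k n S) :
    (n + d).choose n ≤ h0 k n (d + 1) S + S.card := by
  obtain ⟨L, hL0, hL, hLS⟩ := exists_linear_form_of_not_spans hS
  let evalOn : MvPolynomial (Fin (n + 1)) k →ₗ[k] S → k :=
    LinearMap.pi fun p => evalLM k p.1.rep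
  let formsThrough := homogeneousSubmodule (Fin (n + 1)) k d ⊓ LinearMap.ker evalOn
  have map_le : formsThrough.map (LinearMap.mulLeft k L) ≤ singularForms (d + 1) S := by
    rintro _ ⟨Q, ⟨hQ, hQS⟩, rfl⟩
    refine mem_singularForms.2 ⟨Nat.add_comm 1 d ▸ hL.mul hQ, fun p hp => ?_⟩
    exact mul_mem_doubleVanishing (hLS p hp) (congrFun hQS ⟨p, hp⟩)
  calc (n + d).choose n
      = Module.finrank k (homogeneousSubmodule (Fin (n + 1)) k d) :=
        (finrank_homogeneousSubmodule_s6 n d).symm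
    _ ≤ Module.finrank k formsThrough + Module.finrank k (S → k) :=
        finrank_le_finrank_inf_ker_add _ evalOn
    _ = Module.finrank k (formsThrough.map (LinearMap.mulLeft k L)) + S.card := by
        rw [Module.finrank_fintype_fun_eq_card, Fintype.card_coe,
          (Submodule.equivMapOfInjective (LinearMap.mulLeft k L)
            (mul_right_injective₀ hL0) _).finrank_eq]
    _ ≤ h0 k n (d + 1) S + S.card :=
        Nat.add_le_add_right (Submodule.finrank_mono map_le) _

lemma mul_card_lt_choose_of_mem_minTerracini {x : ℕ} (hS : S ∈ minTerracini k n d x)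
    {A : Finset (ProjSpace k n)} (hA : A ⊂ S) : (n + 1) * A.card < (n + d).choose n := by
  obtain ⟨⟨-, -, h0_pos, -⟩, hmin⟩ := hS
  have h1_eq_zero := hmin A hA
  have h0_le : h0 k n d S ≤ h0 k n d A := h0_anti hA.subset
  rw [h1] at h1_eq_zero
  zify at *
  linarith

end SingularForms

section CubicsInSpace

variable {k : Type*} [Field k] {S : Finset (ProjSpace k 3)}

variable (S) in
lemma h1_three_three : h1 k 3 3 S = h0 k 3 3 S + 4 * S.card - 20 := by
  norm_num [h1, Nat.choose]

lemma h0_three_three_le_four (hS : Spans k 3 S) (hcard : S.card = 4) : h0 k 3 3 S ≤ 4 := by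
  obtain ⟨b, hb⟩ := exists_basis_range_eq_of_spans hS hcard
  have map_le : (singularForms 3 S).map (inCoordinates b).toLinearMap ≤
      Submodule.span k (Set.range (complMonomial k)) := by
    rintro _ ⟨F, hF, rfl⟩
    obtain ⟨hF, hFS⟩ := mem_singularForms.1 hF
    refine inCoordinates_mem_span_complMonomial hF fun i => ?_
    obtain ⟨p, hp, hpi⟩ := hb ▸ Set.mem_range_self i
    exact hpi ▸ hFS p hp
  calc h0 k 3 3 S
      = Module.finrank k ((singularForms 3 S).map (inCoordinates b).toLinearMap) :=
        (Submodule.equivMapOfInjective _ (inCoordinates_injective b) _).finrank_eq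
    _ ≤ Module.finrank k (Submodule.span k (Set.range (complMonomial (σ := Fin 4) k))) :=
        haveI := FiniteDimensional.span_of_finite k
          (Set.finite_range (complMonomial (σ := Fin 4) k))
        Submodule.finrank_mono map_le
    _ ≤ 4 := finrank_range_le_card _

lemma h0_three_three_eq_zero [DecidableEq (ProjSpace k 3)] (hcard : S.card = 5)
    (hspans : ∀ p ∈ S, Spans k 3 (S.erase p)) : h0 k 3 3 S = 0 := by
  obtain ⟨b, p, hp, hb, hpb⟩ := exists_basis_equivFun_ne_zero hcard hspans
  refine Submodule.finrank_eq_zero.2 ((Submodule.eq_bot_iff (singularForms 3 S)).2 fun F hF => ?_)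
  obtain ⟨hF, hFS⟩ := mem_singularForms.1 hF
  have hspan : inCoordinates b F ∈ Submodule.span k (Set.range (complMonomial k)) :=
    inCoordinates_mem_span_complMonomial hF fun i => by
      obtain ⟨q, hq, hqi⟩ := hb i
      exact hqi ▸ hFS q hq
  exact (map_eq_zero_iff _ (inCoordinates_injective b)).1
    (eq_zero_of_mem_span_complMonomial hspan hpb (inCoordinates_mem_doubleVanishing (hFS p hp)))

lemma spans_of_h1_three_three_eq_zero (hcard : S.card = 4) (h : h1 k 3 3 S = 0) :
    Spans k 3 S := by
  by_contra hS
  have hle : 10 ≤ h0 k 3 3 S + S.card := choose_le_h0_succ_add_card_of_not_spans (d := 2) hS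
  rw [h1_three_three] at h
  omega

end CubicsInSpace

theorem minTerracini_three_three_empty_general (k : Type*) [Field k] (x : ℕ) :
    minTerracini k 3 3 x = ∅ := by
  classical
  refine Set.eq_empty_of_forall_notMem fun S hS => ?_
  have ⟨⟨_, hspans, h0_pos, h1_pos⟩, hmin⟩ := hS
  have card_ge : 4 ≤ S.card := succ_le_card_of_spans hspans
  obtain ⟨p, hp⟩ : S.Nonempty := Finset.card_pos.1 (by omega)
  have card_le : S.card ≤ 5 := by
    have erase_card_lt : 4 * (S.erase p).card < 20 :=
      mul_card_lt_choose_of_mem_minTerracini hS (Finset.erase_ssubset hp)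
    rw [Finset.card_erase_of_mem hp] at erase_card_lt
    omega
  rcases (by omega : S.card = 4 ∨ S.card = 5) with h4 | h5
  · have h0_le := h0_three_three_le_four hspans h4
    rw [h1_three_three] at h1_pos
    omega
  · refine h0_pos.ne' (h0_three_three_eq_zero h5 fun q hq => ?_)
    exact spans_of_h1_three_three_eq_zero (by rw [Finset.card_erase_of_mem hq, h5])
      (hmin _ (Finset.erase_ssubset hq))

/-- Lemma: there is no minimally Terracini finite set in `P^3` with respect to `O(3)`. -/
theorem minTerracini_three_three_empty
    (k : Type*) [Field k] [IsAlgClosed k] [CharZero k]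
    (x : ℕ) (hx : 0 < x) :
    minTerracini k 3 3 x = ∅ :=
  minTerracini_three_three_empty_general k x
end
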